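/- arXiv:2105.04748 — 2 statements merged into one kernel-verified Lean document; each statement's English description precedes it below -/
import Mathlib

section
/- Let k ≥ 4 be an integer, ε ∈ {1, −1}, and δ(x, y) = x²y + ε·y^{k−1} (a D_k-type singular impasse curve). Let X = (P, Q) be real-analytic on a neighborhood of the origin in ℝ² with P(0,0) ≠ 0 and Q(x, 0) = 0 for all x in a neighborhood of 0. Then the constrained system (X, δ) is orientation-preserving C⁰-orbitally equivalent at (0, 0) to the constrained system (Y, δ), where Y is the constant vector field Y ≡ (P(0,0), Q(0,0)). -/
/-- A phase curve of the vector field `X` in the set `V`: a differentiable curve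
`c : J → V` on a nondegenerate interval `J` with `c'(t) = X(c(t))` for all `t ∈ J`. -/
def IsPhaseCurve (X : ℝ × ℝ → ℝ × ℝ) (V : Set (ℝ × ℝ)) (J : Set ℝ) (c : ℝ → ℝ × ℝ) : Prop :=
  J.OrdConnected ∧ J.Nontrivial ∧ (∀ t ∈ J, c t ∈ V) ∧
    ∀ t ∈ J, HasDerivWithinAt c (X (c t)) J t

/-- The planar constrained systems `(X, δ)` and `(Y, γ)` are orientation-preserving
`C⁰`-orbitally equivalent at `(p₁, p₂)`: there are open neighborhoods `V₁ ∋ p₁`, `V₂ ∋ p₂`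
and a homeomorphism `Φ : V₁ → V₂` sending `p₁` to `p₂` and impasse set to impasse set, which
carries phase curves of `X` off the impasse set onto phase curves of `Y` off the impasse set
up to continuous strictly increasing reparametrizations, and conversely for `Φ⁻¹`. -/
def OrbitallyEquivAt (X : ℝ × ℝ → ℝ × ℝ) (δ : ℝ × ℝ → ℝ) (p₁ : ℝ × ℝ)
    (Y : ℝ × ℝ → ℝ × ℝ) (γ : ℝ × ℝ → ℝ) (p₂ : ℝ × ℝ) : Prop :=
  ∃ (V₁ V₂ : Set (ℝ × ℝ)) (Φ Φinv : ℝ × ℝ → ℝ × ℝ),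
    IsOpen V₁ ∧ IsOpen V₂ ∧ p₁ ∈ V₁ ∧ p₂ ∈ V₂ ∧
    -- Φ is a homeomorphism from V₁ onto V₂ with inverse Φinv
    ContinuousOn Φ V₁ ∧ ContinuousOn Φinv V₂ ∧
    Set.MapsTo Φ V₁ V₂ ∧ Set.MapsTo Φinv V₂ V₁ ∧
    (∀ z ∈ V₁, Φinv (Φ z) = z) ∧ (∀ z ∈ V₂, Φ (Φinv z) = z) ∧
    Φ p₁ = p₂ ∧
    -- Φ maps the impasse set to the impasse set
    Φ '' ({z | δ z = 0} ∩ V₁) = {z | γ z = 0} ∩ V₂ ∧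
    -- Φ maps phase curves of X to phase curves of Y, preserving orientation
    (∀ (J : Set ℝ) (c : ℝ → ℝ × ℝ),
      IsPhaseCurve X (V₁ \ {z | δ z = 0}) J c →
      ∃ (J' : Set ℝ) (d : ℝ → ℝ × ℝ) (τ : ℝ → ℝ),
        IsPhaseCurve Y (V₂ \ {z | γ z = 0}) J' d ∧
        ContinuousOn τ J ∧ StrictMonoOn τ J ∧ τ '' J = J' ∧
        ∀ t ∈ J, Φ (c t) = d (τ t)) ∧
    -- Φ⁻¹ maps phase curves of Y to phase curves of X, preserving orientation
    (∀ (J : Set ℝ) (d : ℝ → ℝ × ℝ),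
      IsPhaseCurve Y (V₂ \ {z | γ z = 0}) J d →
      ∃ (J' : Set ℝ) (c : ℝ → ℝ × ℝ) (τ : ℝ → ℝ),
        IsPhaseCurve X (V₁ \ {z | δ z = 0}) J' c ∧
        ContinuousOn τ J ∧ StrictMonoOn τ J ∧ τ '' J = J' ∧
        ∀ t ∈ J, Φinv (d t) = c (τ t))

/-!
By Hadamard's lemma `Q / P` is divisible by `y`, so the equation `X u = -Q / y` has Lipschitz
coefficients near the origin. The method of characteristics, starting from the line `x = 0`, gives a
solution `u` with `u 0 = 0` which is merely Lipschitz, and `y * exp u` is a first integral of `X`.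
For `β = (k - 2) / 2` the curve `δ = 0` is invariant under the dilations
`(x, y) ↦ (exp (β * s) * x, exp s * y)`, and hence under
`Φ (x, y) = (exp (β * u) * x, exp u * y)`. Since `u 0 = 0` and `u` is Lipschitz, `Φ` is strictly
differentiable at the origin with derivative the identity, so it is a bi-Lipschitz homeomorphism
there, and it maps `X` to a positive multiple of the horizontal field `(P 0, 0)`.
-/

open Set Filter Topology
open scoped NNReal

/-- `f` is Lipschitz on some neighborhood of `x`. This is the regularity shared by all the maps
built from flows below. -/
def LipschitzNear {α β : Type*} [PseudoEMetricSpace α] [PseudoEMetricSpace β] (f : α → β) (x : α) :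
    Prop :=
  ∃ K : ℝ≥0, ∃ s ∈ 𝓝 x, LipschitzOnWith K f s

namespace LipschitzNear

variable {α β γ : Type*} [PseudoEMetricSpace α] [PseudoEMetricSpace β] [PseudoEMetricSpace γ]
  {f : α → β} {x : α}

lemma continuousAt (hf : LipschitzNear f x) : ContinuousAt f x :=
  let ⟨_, _, hs, hK⟩ := hf
  hK.continuousOn.continuousAt hs

lemma eventually (hf : LipschitzNear f x) : ∀ᶠ y in 𝓝 x, LipschitzNear f y :=
  let ⟨K, s, hs, hK⟩ := hf
  (eventually_mem_nhds_iff.2 hs).mono fun _ hy => ⟨K, s, hy, hK⟩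

lemma comp {g : β → γ} (hg : LipschitzNear g (f x)) (hf : LipschitzNear f x) :
    LipschitzNear (g ∘ f) x :=
  let ⟨Kg, t, ht, hgt⟩ := hg
  let ⟨Kf, s, hs, hfs⟩ := hf
  ⟨Kg * Kf, s ∩ f ⁻¹' t, inter_mem hs (hf.continuousAt ht),
    hgt.comp (hfs.mono inter_subset_left) fun _ hy => hy.2⟩

lemma of_contDiffAt {E F : Type*} [NormedAddCommGroup E] [NormedSpace ℝ E] [NormedAddCommGroup F]
    [NormedSpace ℝ F] {f : E → F} {x : E} (hf : ContDiffAt ℝ 1 f x) : LipschitzNear f x :=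
  hf.exists_lipschitzOnWith

lemma exists_lipschitzWith_eventuallyEq {α : Type*} [PseudoMetricSpace α] {f : α → ℝ} {x : α}
    (hf : LipschitzNear f x) : ∃ (K : ℝ≥0) (f' : α → ℝ), LipschitzWith K f' ∧ f' =ᶠ[𝓝 x] f := by
  obtain ⟨K, s, hs, hK⟩ := hf
  obtain ⟨f', hf', heq⟩ := hK.extend_real
  exact ⟨K, f', hf', heq.symm.eventuallyEq_of_mem hs⟩

end LipschitzNear

section LineDerivatives

variable {E F : Type*} [NormedAddCommGroup E] [NormedSpace ℝ E]
  [NormedAddCommGroup F] [NormedSpace ℝ F] {Φ : E → F}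

lemma hasDerivAt_line (x w : E) (t : ℝ) : HasDerivAt (fun s : ℝ => x + (s - t) • w) w t := by
  simpa using! (((hasDerivAt_id t).sub_const t).smul_const w).const_add x

lemma hasDerivWithinAt_comp_of_tangent {c₁ c₂ : ℝ → E} {w : E} {w' : F} {J : Set ℝ} {t : ℝ}
    (hΦ : LipschitzNear Φ (c₁ t)) (h₁ : HasDerivWithinAt c₁ w J t)
    (h₂ : HasDerivWithinAt c₂ w J t) (heq : c₁ t = c₂ t)
    (h : HasDerivWithinAt (Φ ∘ c₁) w' J t) : HasDerivWithinAt (Φ ∘ c₂) w' J t := by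
  obtain ⟨K, s, hs, hK⟩ := hΦ
  have tangent : (fun r => c₂ r - c₁ r) =o[𝓝[J] t] fun r => r - t := by
    simpa [heq] using (h₂.sub h₁).isLittleO
  have image_close : (fun r => Φ (c₂ r) - Φ (c₁ r)) =O[𝓝[J] t] fun r => c₂ r - c₁ r := by
    refine Asymptotics.IsBigO.of_bound K ?_
    filter_upwards [h₁.continuousWithinAt hs, h₂.continuousWithinAt (heq ▸ hs)] with r hr₁ hr₂
    exact hK.norm_sub_le hr₂ hr₁
  have image_tangent : HasDerivWithinAt (fun r => Φ (c₂ r) - Φ (c₁ r)) 0 J t :=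
    .of_isLittleO (by simpa [heq] using image_close.trans_isLittleO tangent)
  refine ((image_tangent.add h).congr_deriv (zero_add w')).congr_of_eventuallyEq ?_ ?_
  · exact .of_forall fun r => by simp
  · simp

lemma hasDerivWithinAt_comp_of_hasLineDerivAt {c : ℝ → E} {w : E} {w' : F} {J : Set ℝ} {t : ℝ}
    (hΦ : LipschitzNear Φ (c t)) (hline : HasLineDerivAt ℝ Φ w' (c t) w)
    (hc : HasDerivWithinAt c w J t) : HasDerivWithinAt (Φ ∘ c) w' J t := by
  have along_line : HasDerivAt (fun s : ℝ => Φ (c t + (s - t) • w)) w' t := by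
    have hline₀ : HasDerivAt (fun s : ℝ => Φ (c t + s • w)) w' (t - t) := by rwa [sub_self]
    exact hline₀.comp_sub_const t t
  exact hasDerivWithinAt_comp_of_tangent (by simpa using hΦ)
    (hasDerivAt_line (c t) w t).hasDerivWithinAt hc (by simp) along_line.hasDerivWithinAt

lemma hasLineDerivAt_of_hasDerivAt_comp {c : ℝ → E} {w : E} {w' : F}
    (hΦ : LipschitzNear Φ (c 0)) (hc : HasDerivAt c w 0) (h : HasDerivAt (Φ ∘ c) w' 0) :
    HasLineDerivAt ℝ Φ w' (c 0) w := by
  have hline : HasDerivAt (fun s : ℝ => c 0 + s • w) w 0 := by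
    simpa using hasDerivAt_line (c 0) w 0
  exact hasDerivWithinAt_univ.1 <| hasDerivWithinAt_comp_of_tangent hΦ hc.hasDerivWithinAt
    hline.hasDerivWithinAt (by simp) h.hasDerivWithinAt

lemma hasLineDerivAt_of_leftInverse {Ψ : F → E} {x w : E} {w' : F}
    (hΦ : HasLineDerivAt ℝ Φ w' x w) (hΨ : LipschitzNear Ψ (Φ x))
    (hleft : ∀ᶠ y in 𝓝 x, Ψ (Φ y) = y) : HasLineDerivAt ℝ Ψ w (Φ x) w' := by
  have hline : HasDerivAt (fun s : ℝ => x + s • w) w 0 := by simpa using hasDerivAt_line x w 0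
  have hleft₀ : ∀ᶠ y in 𝓝 (x + (0 : ℝ) • w), Ψ (Φ y) = y := by simpa using hleft
  have back_on_line : Ψ ∘ (fun s : ℝ => Φ (x + s • w)) =ᶠ[𝓝 0] fun s => x + s • w :=
    hline.continuousAt.eventually hleft₀
  simpa using hasLineDerivAt_of_hasDerivAt_comp (c := fun s : ℝ => Φ (x + s • w))
    (by simpa using hΨ) hΦ (hline.congr_of_eventuallyEq back_on_line)

end LineDerivatives

section Reparametrization

lemma hasDerivWithinAt_intervalIntegral {E : Type*} [NormedAddCommGroup E] [NormedSpace ℝ E]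
    [CompleteSpace E] {J : Set ℝ} (hJ : J.OrdConnected) {μ : ℝ → E} (hμ : ContinuousOn μ J)
    {t₀ t : ℝ} (ht₀ : t₀ ∈ J) (ht : t ∈ J) :
    HasDerivWithinAt (fun u => ∫ s in t₀..u, μ s) (μ t) J t := by
  have integrable {a b : ℝ} (ha : a ∈ J) (hb : b ∈ J) :
      IntervalIntegrable μ MeasureTheory.volume a b :=
    (hμ.mono (hJ.uIcc_subset ha hb)).intervalIntegrable
  rw [hasDerivWithinAt_iff_isLittleO, Asymptotics.isLittleO_iff]
  intro c hc
  obtain ⟨d, hd, hclose⟩ := Metric.continuousWithinAt_iff.1 (hμ t ht) c hc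
  filter_upwards [self_mem_nhdsWithin, mem_nhdsWithin_of_mem_nhds (Metric.ball_mem_nhds t hd)]
    with u hu hud
  have remainder : (∫ s in t₀..u, μ s) - (∫ s in t₀..t, μ s) - (u - t) • μ t
      = ∫ s in t..u, (μ s - μ t) := by
    rw [intervalIntegral.integral_sub (integrable ht hu) (by simp),
      intervalIntegral.integral_interval_sub_left (integrable ht₀ hu) (integrable ht₀ ht),
      intervalIntegral.integral_const]
  rw [remainder, Real.norm_eq_abs]
  refine intervalIntegral.norm_integral_le_of_norm_le_const fun s hs => ?_
  have hs : s ∈ uIcc t u := uIoc_subset_uIcc hs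
  rw [← dist_eq_norm]
  refine (hclose (hJ.uIcc_subset ht hu hs) ?_).le
  exact (abs_sub_left_of_mem_uIcc hs).trans_lt hud

lemma continuousOn_invFunOn_of_strictMonoOn {α β : Type*} [Nonempty α]
    [LinearOrder α] [TopologicalSpace α] [OrderTopology α]
    [LinearOrder β] [TopologicalSpace β] [OrderTopology β] {τ : α → β} {J : Set α}
    (hJ : J.OrdConnected) (hJ' : (τ '' J).OrdConnected) (hτ : StrictMonoOn τ J) :
    ContinuousOn (Function.invFunOn τ J) (τ '' J) := by
  rw [continuousOn_iff_continuous_domRestrict]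
  refine (continuous_subtype_val.comp (hτ.orderIso τ J).symm.continuous).congr ?_
  rintro ⟨_, t, ht, rfl⟩
  have : (hτ.orderIso τ J).symm ⟨τ t, t, ht, rfl⟩ = ⟨t, ht⟩ := by
    rw [OrderIso.symm_apply_eq]; rfl
  simp only [Function.comp_apply, this, domRestrict_apply, hτ.injOn.leftInvOn_invFunOn ht]

lemma hasDerivWithinAt_invFunOn {𝕜 : Type*} [NontriviallyNormedField 𝕜] {τ : 𝕜 → 𝕜} {J : Set 𝕜}
    (hinj : InjOn τ J) {t m : 𝕜} (ht : t ∈ J) (hτ : HasDerivWithinAt τ m J t) (hm : m ≠ 0)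
    (hcont : ContinuousWithinAt (Function.invFunOn τ J) (τ '' J) (τ t)) :
    HasDerivWithinAt (Function.invFunOn τ J) m⁻¹ (τ '' J) (τ t) := by
  have hleft : LeftInvOn (Function.invFunOn τ J) τ J := hinj.leftInvOn_invFunOn
  let e : 𝕜 ≃L[𝕜] 𝕜 := ContinuousLinearEquiv.unitsEquivAut 𝕜 (Units.mk0 m hm)
  have hτ' : HasFDerivWithinAt τ (e : 𝕜 →L[𝕜] 𝕜) J (Function.invFunOn τ J (τ t)) := by
    rw [hleft ht]
    exact hτ.hasFDerivWithinAt.congr_fderiv (by ext; simp [e])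
  have hinv := hτ'.of_local_left_inverse
    (hcont.tendsto_nhdsWithin fun _ => Function.invFunOn_mem) (mem_image_of_mem τ ht)
    (eventually_mem_nhdsWithin.mono fun _ => Function.invFunOn_eq)
  exact hinv.hasDerivWithinAt.congr_deriv (by simp [e])

end Reparametrization

section OrientedOrbits

/-- The curve `e : J → ℝ × ℝ` is, up to a continuous increasing change of parameter, a phase curve
of `Y` in `V`: these are the curves onto which `OrbitallyEquivAt` requires phase curves to be
mapped. -/
def IsOrientedOrbit (Y : ℝ × ℝ → ℝ × ℝ) (V : Set (ℝ × ℝ)) (J : Set ℝ) (e : ℝ → ℝ × ℝ) : Prop :=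
  ∃ (J' : Set ℝ) (d : ℝ → ℝ × ℝ) (τ : ℝ → ℝ),
    IsPhaseCurve Y V J' d ∧ ContinuousOn τ J ∧ StrictMonoOn τ J ∧ τ '' J = J' ∧
      ∀ t ∈ J, e t = d (τ t)

variable {X Y : ℝ × ℝ → ℝ × ℝ} {A B : Set (ℝ × ℝ)} {J : Set ℝ}

lemma isOrientedOrbit_of_hasDerivWithinAt_smul (hJ : J.OrdConnected) (hJ₂ : J.Nontrivial)
    {e : ℝ → ℝ × ℝ} {μ : ℝ → ℝ} (hμ : ContinuousOn μ J) (hpos : ∀ t ∈ J, 0 < μ t)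
    (heB : MapsTo e J B) (he : ∀ t ∈ J, HasDerivWithinAt e (μ t • Y (e t)) J t) :
    IsOrientedOrbit Y B J e := by
  obtain ⟨t₀, ht₀⟩ := hJ₂.nonempty
  let τ : ℝ → ℝ := fun t => ∫ s in t₀..t, μ s
  have hτ : ∀ t ∈ J, HasDerivWithinAt τ (μ t) J t := fun t ht =>
    hasDerivWithinAt_intervalIntegral hJ hμ ht₀ ht
  have τ_cont : ContinuousOn τ J := fun t ht => (hτ t ht).continuousWithinAt
  have τ_mono : StrictMonoOn τ J := strictMonoOn_of_hasDerivWithinAt_pos hJ.convex τ_cont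
    (fun t ht => (hτ t (interior_subset ht)).mono interior_subset)
    fun t ht => hpos t (interior_subset ht)
  let σ : ℝ → ℝ := Function.invFunOn τ J
  have σ_τ : LeftInvOn σ τ J := τ_mono.injOn.leftInvOn_invFunOn
  have image_ordConnected : (τ '' J).OrdConnected :=
    (hJ.isPreconnected.image τ τ_cont).ordConnected
  have σ_cont : ContinuousOn σ (τ '' J) :=
    continuousOn_invFunOn_of_strictMonoOn hJ image_ordConnected τ_mono
  refine ⟨τ '' J, e ∘ σ, τ, ⟨image_ordConnected, hJ₂.image_of_injOn τ_mono.injOn, ?_, ?_⟩,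
    τ_cont, τ_mono, rfl, fun t ht => congrArg e (σ_τ ht).symm⟩
  · rintro _ ⟨t, ht, rfl⟩
    exact heB (Function.invFunOn_apply_mem ht)
  · rintro _ ⟨t, ht, rfl⟩
    have hσ : HasDerivWithinAt σ (μ t)⁻¹ (τ '' J) (τ t) :=
      hasDerivWithinAt_invFunOn τ_mono.injOn ht (hτ t ht) (hpos t ht).ne'
        (σ_cont _ (mem_image_of_mem τ ht))
    have he' : HasDerivWithinAt e (μ t • Y (e t)) J (σ (τ t)) := by
      rw [σ_τ ht]; exact he t ht
    refine (he'.scomp (τ t) hσ fun _ => Function.invFunOn_mem).congr_deriv ?_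
    simp [σ_τ ht, (hpos t ht).ne']

lemma isOrientedOrbit_comp {Φ : ℝ × ℝ → ℝ × ℝ} {μ : ℝ × ℝ → ℝ} {c : ℝ → ℝ × ℝ}
    (hΦ : ∀ z ∈ A, LipschitzNear Φ z) (hμ : ContinuousOn μ A) (hpos : ∀ z ∈ A, 0 < μ z)
    (hline : ∀ z ∈ A, HasLineDerivAt ℝ Φ (μ z • Y (Φ z)) z (X z)) (hAB : MapsTo Φ A B)
    (hc : IsPhaseCurve X A J c) : IsOrientedOrbit Y B J (Φ ∘ c) := by
  obtain ⟨hJ, hJ₂, hcA, hcX⟩ := hc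
  refine isOrientedOrbit_of_hasDerivWithinAt_smul hJ hJ₂
    (hμ.comp (fun t ht => (hcX t ht).continuousWithinAt) hcA) (fun t ht => hpos _ (hcA t ht))
    (hAB.comp hcA) fun t ht => ?_
  exact hasDerivWithinAt_comp_of_hasLineDerivAt (hΦ _ (hcA t ht)) (hline _ (hcA t ht)) (hcX t ht)

end OrientedOrbits

section LocalHomeomorphism

lemma exists_bilipschitz_openPartialHomeomorph {E F : Type*} [NormedAddCommGroup E]
    [NormedSpace ℝ E] [CompleteSpace E] [NormedAddCommGroup F] [NormedSpace ℝ F] {Φ : E → F}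
    {Φ' : E ≃L[ℝ] F} {p : E} (hΦ : HasStrictFDerivAt Φ (Φ' : E →L[ℝ] F) p) {q : E → Prop}
    (hq : ∀ᶠ z in 𝓝 p, q z) :
    ∃ e : OpenPartialHomeomorph E F, p ∈ e.source ∧ ⇑e = Φ ∧ (∀ z ∈ e.source, q z) ∧
      (∀ z ∈ e.source, LipschitzNear e z) ∧ ∀ y ∈ e.target, LipschitzNear e.symm y := by
  obtain ⟨s, hps, hs, happrox⟩ := hΦ.approximates_deriv_on_open_nhds
  obtain ⟨t, htq, ht, hpt⟩ := mem_nhds_iff.1 hq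
  have happrox' := happrox.mono_set (inter_subset_left (t := t))
  have hc : Subsingleton E ∨ ‖(Φ'.symm : F →L[ℝ] E)‖₊⁻¹ / 2 < ‖(Φ'.symm : F →L[ℝ] E)‖₊⁻¹ :=
    Φ'.subsingleton_or_nnnorm_symm_pos.imp id fun h => NNReal.half_lt_self (inv_ne_zero h.ne')
  let e := happrox'.toOpenPartialHomeomorph Φ (s ∩ t) hc (hs.inter ht)
  refine ⟨e, ⟨hps, hpt⟩, rfl, fun z hz => htq hz.2, fun z hz => ?_, fun y hy => ?_⟩
  · exact ⟨_, _, e.open_source.mem_nhds hz, lipschitzOnWith_iff_restrict.2 happrox'.lipschitz⟩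
  · exact ⟨_, _, e.open_target.mem_nhds hy,
      lipschitzOnWith_iff_restrict.2 (happrox'.to_inv hc).lipschitz⟩

/-- A locally bi-Lipschitz change of variables need not be differentiable to conjugate two vector
fields: it is enough that it has line derivatives in the direction of the first field. -/
lemma orbitallyEquivAt_of_hasStrictFDerivAt {X Y : ℝ × ℝ → ℝ × ℝ} {δ γ : ℝ × ℝ → ℝ} {p : ℝ × ℝ}
    {Φ : ℝ × ℝ → ℝ × ℝ} {Φ' : (ℝ × ℝ) ≃L[ℝ] ℝ × ℝ} {μ : ℝ × ℝ → ℝ}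
    (hΦ : HasStrictFDerivAt Φ (Φ' : (ℝ × ℝ) →L[ℝ] ℝ × ℝ) p)
    (himpasse : ∀ᶠ z in 𝓝 p, γ (Φ z) = 0 ↔ δ z = 0)
    (hμ : ∀ᶠ z in 𝓝 p, ContinuousAt μ z) (hpos : ∀ᶠ z in 𝓝 p, 0 < μ z)
    (hline : ∀ᶠ z in 𝓝 p, HasLineDerivAt ℝ Φ (μ z • Y (Φ z)) z (X z)) :
    OrbitallyEquivAt X δ p Y γ (Φ p) := by
  obtain ⟨e, hpe, he, hgood, hLip, hLip_symm⟩ := exists_bilipschitz_openPartialHomeomorph hΦ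
    (himpasse.and (hμ.and (hpos.and hline)))
  rw [← he] at hgood ⊢
  choose impasse_iff μ_cont μ_pos hasLineDerivAt using hgood
  have impasse_isImage : e.IsImage {z | δ z = 0} {z | γ z = 0} := impasse_iff
  have symm_hasLineDerivAt : ∀ y ∈ e.target,
      HasLineDerivAt ℝ e.symm ((μ (e.symm y))⁻¹ • X (e.symm y)) y (Y y) := by
    intro y hy
    have hz := e.map_target hy
    have hLip' : LipschitzNear e.symm (e (e.symm y)) := by rw [e.right_inv hy]; exact hLip_symm y hy
    have hinv := (hasLineDerivAt_of_leftInverse (hasLineDerivAt _ hz) hLip'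
      (e.eventually_left_inverse hz)).smul (μ (e.symm y))⁻¹
    simpa [e.right_inv hy, smul_smul, (μ_pos _ hz).ne'] using hinv
  have symm_continuousOn : ContinuousOn (fun y => (μ (e.symm y))⁻¹) e.target := fun y hy =>
    (((μ_cont _ (e.map_target hy)).comp (e.continuousAt_symm hy)).inv₀
      (μ_pos _ (e.map_target hy)).ne').continuousWithinAt
  refine ⟨e.source, e.target, e, e.symm, e.open_source, e.open_target, hpe, e.map_source hpe,
    e.continuousOn, e.continuousOn_symm, fun _ => e.map_source, fun _ => e.map_target,
    fun _ => e.left_inv, fun _ => e.right_inv, rfl,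
    by simpa only [inter_comm] using impasse_isImage.image_eq, fun J c => ?_, fun J d => ?_⟩
  · exact isOrientedOrbit_comp (fun z hz => hLip z hz.1)
      (fun z hz => (μ_cont z hz.1).continuousWithinAt) (fun z hz => μ_pos z hz.1)
      (fun z hz => hasLineDerivAt z hz.1) impasse_isImage.compl.mapsTo
  · exact isOrientedOrbit_comp (fun y hy => hLip_symm y hy.1)
      (symm_continuousOn.mono sdiff_subset)
      (fun y hy => inv_pos.2 (μ_pos _ (e.map_target hy.1)))
      (fun y hy => symm_hasLineDerivAt y hy.1) impasse_isImage.compl.symm_mapsTo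

end LocalHomeomorphism

section HadamardQuotient

variable {E F : Type*} [NormedAddCommGroup E] [NormedAddCommGroup F]

lemma lipschitzWith_one_smul_snd {θ : ℝ} (hθ : θ ∈ Icc (0 : ℝ) 1) :
    LipschitzWith 1 fun z : E × ℝ => (z.1, θ * z.2) := by
  refine LipschitzWith.of_dist_le_mul fun z w => ?_
  rw [NNReal.coe_one, one_mul, Prod.dist_eq, Prod.dist_eq]
  refine max_le_max le_rfl ?_
  rw [Real.dist_eq, ← mul_sub, abs_mul, abs_of_nonneg hθ.1]
  exact mul_le_of_le_one_left (abs_nonneg _) hθ.2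

lemma mapsTo_smul_snd_ball {θ : ℝ} (hθ : θ ∈ Icc (0 : ℝ) 1) (x : E) (r : ℝ) :
    MapsTo (fun z : E × ℝ => (z.1, θ * z.2)) (Metric.ball (x, 0) r) (Metric.ball (x, 0) r) := by
  simpa using (lipschitzWith_one_smul_snd hθ).mapsTo_ball one_ne_zero (x, 0) r

lemma intervalIntegrable_comp_smul_snd {D : E × ℝ → F} {x : E} {r : ℝ}
    (hD : ContinuousOn D (Metric.ball (x, 0) r)) {z : E × ℝ} (hz : z ∈ Metric.ball (x, 0) r) :
    IntervalIntegrable (fun θ => D (z.1, θ * z.2)) MeasureTheory.volume 0 1 := by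
  refine ContinuousOn.intervalIntegrable ?_
  rw [uIcc_of_le zero_le_one]
  exact hD.comp (by fun_prop) fun θ hθ => mapsTo_smul_snd_ball hθ x r hz

variable [NormedSpace ℝ F]

lemma lipschitzOnWith_integral_zero_one {α : Type*} [PseudoMetricSpace α] {G : α → ℝ → F}
    {s : Set α} {K : ℝ≥0} (hint : ∀ z ∈ s, IntervalIntegrable (G z) MeasureTheory.volume 0 1)
    (hG : ∀ θ ∈ Icc (0 : ℝ) 1, LipschitzOnWith K (fun z => G z θ) s) :
    LipschitzOnWith K (fun z => ∫ θ in (0 : ℝ)..1, G z θ) s := by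
  refine LipschitzOnWith.of_dist_le_mul fun z hz w hw => ?_
  rw [dist_eq_norm, ← intervalIntegral.integral_sub (hint z hz) (hint w hw)]
  have hbound := intervalIntegral.norm_integral_le_of_norm_le_const (a := (0 : ℝ)) (b := 1)
    (f := fun θ => G z θ - G w θ) (C := K * dist z w) fun θ hθ => by
      rw [uIoc_of_le zero_le_one] at hθ
      rw [← dist_eq_norm]
      exact (hG θ (Ioc_subset_Icc_self hθ)).dist_le_mul z hz w hw
  simpa using hbound

variable [NormedSpace ℝ E]

/-- The quotient of `f z - f (z.1, 0)` by `z.2`, extended to `z.2 = 0` by means of Hadamard's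
integral formula. -/
noncomputable def hadamardQuotient (f : E × ℝ → F) (z : E × ℝ) : F :=
  ∫ θ in (0 : ℝ)..1, fderiv ℝ f (z.1, θ * z.2) (0, 1)

lemma smul_hadamardQuotient [CompleteSpace F] {f : E × ℝ → F} {x : E} {r : ℝ}
    (hf : ∀ z ∈ Metric.ball (x, 0) r, DifferentiableAt ℝ f z)
    (hD : ContinuousOn (fun z => fderiv ℝ f z (0, 1)) (Metric.ball (x, 0) r))
    {z : E × ℝ} (hz : z ∈ Metric.ball (x, 0) r) :
    z.2 • hadamardQuotient f z = f z - f (z.1, 0) := by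
  have hderiv : ∀ θ ∈ uIcc (0 : ℝ) 1, HasDerivAt (fun θ : ℝ => f (z.1, θ * z.2))
      (z.2 • fderiv ℝ f (z.1, θ * z.2) (0, 1)) θ := by
    intro θ hθ
    rw [uIcc_of_le zero_le_one] at hθ
    have hsegment : HasDerivAt (fun θ : ℝ => (z.1, θ * z.2)) (0, z.2) θ := by
      simpa using! (hasDerivAt_const θ z.1).prodMk ((hasDerivAt_id θ).mul_const z.2)
    have hcomp := (hf _ (mapsTo_smul_snd_ball hθ x r hz)).hasFDerivAt.comp_hasDerivAt θ hsegment
    refine hcomp.congr_deriv ?_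
    rw [← map_smul]
    simp
  have hint := (intervalIntegrable_comp_smul_snd hD hz).smul z.2
  simpa [hadamardQuotient] using intervalIntegral.integral_eq_sub_of_hasDerivAt hderiv hint

lemma exists_ball_lipschitzOnWith_fderiv_apply {f : E × ℝ → F} {x : E}
    (hf : ContDiffAt ℝ 2 f (x, 0)) :
    ∃ (K : ℝ≥0) (r : ℝ), 0 < r ∧ (∀ z ∈ Metric.ball (x, 0) r, DifferentiableAt ℝ f z) ∧
      LipschitzOnWith K (fun z => fderiv ℝ f z (0, 1)) (Metric.ball (x, 0) r) := by
  have hD : ContDiffAt ℝ 1 (fun z => fderiv ℝ f z (0, 1)) (x, 0) :=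
    (hf.fderiv_right (m := 1) (by norm_num)).clm_apply contDiffAt_const
  obtain ⟨K, s, hs, hK⟩ := hD.exists_lipschitzOnWith
  have hdiff : ∀ᶠ z in 𝓝 (x, (0 : ℝ)), DifferentiableAt ℝ f z :=
    (hf.eventually (by simp)).mono fun z hz => hz.differentiableAt (by simp)
  obtain ⟨r, hr, hball⟩ := Metric.mem_nhds_iff.1 (inter_mem hs hdiff)
  exact ⟨K, r, hr, fun z hz => (hball hz).2, hK.mono fun z hz => (hball hz).1⟩

lemma lipschitzNear_hadamardQuotient {f : E × ℝ → F} {x : E} (hf : ContDiffAt ℝ 2 f (x, 0)) :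
    LipschitzNear (hadamardQuotient f) (x, 0) := by
  obtain ⟨K, r, hr, -, hK⟩ := exists_ball_lipschitzOnWith_fderiv_apply hf
  refine ⟨K, _, Metric.ball_mem_nhds _ hr, lipschitzOnWith_integral_zero_one
    (fun z hz => intervalIntegrable_comp_smul_snd hK.continuousOn hz) fun θ hθ => ?_⟩
  simpa [Function.comp_def] using
    hK.comp (lipschitzWith_one_smul_snd hθ).lipschitzOnWith (mapsTo_smul_snd_ball hθ x r)

lemma eventually_smul_hadamardQuotient [CompleteSpace F] {f : E × ℝ → F} {x : E}
    (hf : ContDiffAt ℝ 2 f (x, 0)) :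
    ∀ᶠ z in 𝓝 (x, (0 : ℝ)), z.2 • hadamardQuotient f z = f z - f (z.1, 0) := by
  obtain ⟨K, r, hr, hdiff, hK⟩ := exists_ball_lipschitzOnWith_fderiv_apply hf
  filter_upwards [Metric.ball_mem_nhds _ hr] with z hz
  exact smul_hadamardQuotient hdiff hK.continuousOn hz

end HadamardQuotient

section LocalFlow

variable {E : Type*} [NormedAddCommGroup E]

lemma lipschitzOnWith_uncurry {α β γ : Type*} [PseudoEMetricSpace α] [PseudoEMetricSpace β]
    [PseudoEMetricSpace γ] {f : α → β → γ} {s : Set α} {t : Set β} {K₁ K₂ : ℝ≥0}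
    (h₁ : ∀ b ∈ t, LipschitzOnWith K₁ (f · b) s) (h₂ : ∀ a ∈ s, LipschitzOnWith K₂ (f a) t) :
    LipschitzOnWith (K₁ + K₂) (Function.uncurry f) (s ×ˢ t) := by
  rintro ⟨a₁, b₁⟩ ⟨ha₁, hb₁⟩ ⟨a₂, b₂⟩ ⟨ha₂, hb₂⟩
  simp only [Function.uncurry, ENNReal.coe_add, add_mul]
  refine (edist_triangle _ (f a₂ b₁) _).trans (add_le_add ?_ ?_)
  · exact (h₁ b₁ hb₁ ha₁ ha₂).trans (by gcongr; exact le_max_left _ _)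
  · exact (h₂ a₂ ha₂ hb₁ hb₂).trans (by gcongr; exact le_max_right _ _)

lemma exists_isPicardLindelof_of_lipschitzWith {F : E → E} {K : ℝ≥0} (hF : LipschitzWith K F)
    (x₀ : E) : ∃ (T : ℝ) (hT : 0 < T) (L : ℝ≥0), IsPicardLindelof (fun _ => F)
      (tmin := -T) (tmax := T) ⟨0, by simp [hT.le]⟩ x₀ 1 (1 / 2) L K := by
  let L : ℝ≥0 := ‖F x₀‖₊ + K
  have hbound : ∀ x ∈ Metric.closedBall x₀ (1 : ℝ≥0), ‖F x‖ ≤ L := fun x hx => calc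
    ‖F x‖ ≤ ‖F x₀‖ + dist (F x) (F x₀) := norm_le_norm_add_const_of_dist_le le_rfl
    _ ≤ ‖F x₀‖ + K * 1 := by gcongr; exact hF.dist_le_mul_of_le hx
    _ = L := by simp [L]
  have hT : (0 : ℝ) < 1 / (2 * (L + 1)) := by positivity
  refine ⟨_, hT, L, .of_time_independent hbound hF.lipschitzOnWith ?_⟩
  have : (L : ℝ) * (1 / (2 * (L + 1))) ≤ 1 / 2 := by
    rw [mul_one_div, div_le_iff₀ (by positivity)]
    linarith
  simp only [sub_zero, zero_sub, neg_neg, max_self, NNReal.coe_one]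
  push_cast
  linarith

variable [NormedSpace ℝ E] {F : E → E} {α : E → ℝ → E} {x₀ : E} {r : ℝ} {K : ℝ≥0}

/-- `α` is a flow of the vector field `F` for initial points in the ball of radius `r` around `x₀`
and times in `(-r, r)`. -/
structure IsLocalFlow (F : E → E) (α : E → ℝ → E) (x₀ : E) (r : ℝ) : Prop where
  pos : 0 < r
  init : ∀ x ∈ Metric.ball x₀ r, α x 0 = x
  hasDerivAt : ∀ x ∈ Metric.ball x₀ r, ∀ t ∈ Ioo (-r) r, HasDerivAt (α x) (F (α x t)) t

lemma exists_isLocalFlow_lipschitzOnWith [CompleteSpace E] (hF : LipschitzWith K F) (x₀ : E) :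
    ∃ α r K', IsLocalFlow F α x₀ r ∧
      ∀ t ∈ Ioo (-r) r, LipschitzOnWith K' (α · t) (Metric.ball x₀ r) := by
  obtain ⟨T, hT, L, hpl⟩ := exists_isPicardLindelof_of_lipschitzWith hF x₀
  obtain ⟨α, hα, K', hK'⟩ := hpl.exists_forall_mem_closedBall_eq_hasDerivWithinAt_lipschitzOnWith
  have ball_subset : Metric.ball x₀ (min T (1 / 2)) ⊆ Metric.closedBall x₀ (1 / 2 : ℝ≥0) :=
    (Metric.ball_subset_ball (by simp)).trans Metric.ball_subset_closedBall
  have Ioo_subset : Ioo (-min T (1 / 2)) (min T (1 / 2)) ⊆ Ioo (-T) T :=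
    Ioo_subset_Ioo (neg_le_neg (min_le_left _ _)) (min_le_left _ _)
  refine ⟨α, min T (1 / 2), K', ⟨by positivity, fun x hx => (hα x (ball_subset hx)).1, ?_⟩,
    fun t ht => (hK' t (Ioo_subset_Icc_self (Ioo_subset ht))).mono ball_subset⟩
  intro x hx t ht
  have ht' := Ioo_subset ht
  exact ((hα x (ball_subset hx)).2 t (Ioo_subset_Icc_self ht')).hasDerivAt
    (Icc_mem_nhds ht'.1 ht'.2)

namespace IsLocalFlow

lemma lipschitzNear_uncurry (hα : IsLocalFlow F α x₀ r) (hF : Continuous F)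
    (hK : ∀ t ∈ Ioo (-r) r, LipschitzOnWith K (α · t) (Metric.ball x₀ r)) :
    LipschitzNear (Function.uncurry α) (x₀, 0) := by
  have h₀ : x₀ ∈ Metric.ball x₀ r := Metric.mem_ball_self hα.pos
  have domain_mem : Metric.ball x₀ r ×ˢ Ioo (-r) r ∈ 𝓝 (x₀, (0 : ℝ)) :=
    prod_mem_nhds (Metric.ball_mem_nhds x₀ hα.pos) (Ioo_mem_nhds (by simp [hα.pos]) hα.pos)
  have α_cont : ContinuousAt (Function.uncurry α) (x₀, 0) :=
    (continuousOn_prod_of_continuousOn_lipschitzOnWith (Function.uncurry α) K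
      (fun x hx => HasDerivAt.continuousOn (hα.hasDerivAt x hx)) hK).continuousAt domain_mem
  have speed_lt : ∀ᶠ p in 𝓝 (x₀, (0 : ℝ)), ‖F (α p.1 p.2)‖ < ‖F x₀‖ + 1 := by
    refine (hF.continuousAt.comp α_cont).norm.eventually_lt_const ?_
    simp [hα.init x₀ h₀]
  obtain ⟨ρ, hρ, hball⟩ := Metric.mem_nhds_iff.1 (inter_mem domain_mem speed_lt)
  rw [← ball_prod_same] at hball
  refine ⟨K + (‖F x₀‖₊ + 1), _, prod_mem_nhds (Metric.ball_mem_nhds x₀ hρ)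
    (Metric.ball_mem_nhds 0 hρ), lipschitzOnWith_uncurry (fun t ht => ?_) fun x hx => ?_⟩
  · have ht' := (hball (mk_mem_prod (Metric.mem_ball_self hρ) ht)).1.2
    exact (hK t ht').mono fun x hx => (hball (mk_mem_prod hx ht)).1.1
  · refine (convex_ball 0 ρ).lipschitzOnWith_of_nnnorm_hasDerivWithin_le (fun t ht => ?_)
      fun t ht => (hball (mk_mem_prod hx ht)).2.le
    have hxt := (hball (mk_mem_prod hx ht)).1
    exact (hα.hasDerivAt x hxt.1 t hxt.2).hasDerivWithinAt

lemma map_eq_add (hα : IsLocalFlow F α x₀ r) {ℓ : E →L[ℝ] ℝ} (hℓ : ∀ x, ℓ (F x) = 1) {x : E}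
    (hx : x ∈ Metric.ball x₀ r) {t : ℝ} (ht : t ∈ Ioo (-r) r) : ℓ (α x t) = ℓ x + t := by
  have unit_speed : ∀ t ∈ Ioo (-r) r, HasDerivAt (fun t => ℓ (α x t)) 1 t := fun t ht => by
    simpa [hℓ] using! ℓ.hasFDerivAt.comp_hasDerivAt t (hα.hasDerivAt x hx t ht)
  refine ODE_solution_unique_of_mem_Ioo (v := fun _ _ => 1) (s := fun _ => univ) (K := 0)
    (t₀ := 0) (g := fun t => ℓ x + t) (fun _ _ => (LipschitzWith.const 1).lipschitzOnWith)
    (by simp [hα.pos]) (fun t ht => ⟨unit_speed t ht, trivial⟩)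
    (fun t _ => ⟨(hasDerivAt_id t).const_add _, trivial⟩) (by simp [hα.init x hx]) ht

lemma apply_add_of_translation (hα : IsLocalFlow F α x₀ r) (hF : LipschitzWith K F) {w : E}
    (hw : ∀ x, F (x + w) = F x) {x y : E} (hx : x ∈ Metric.ball x₀ r) (hy : y ∈ Metric.ball x₀ r)
    {s t : ℝ} (hs : |s| < r / 2) (ht : |t| < r / 2) (hxy : α x s = y + w) :
    α x (s + t) = α y t + w := by
  rw [abs_lt] at hs ht
  refine ODE_solution_unique_of_mem_Ioo (v := fun _ => F) (s := fun _ => univ) (K := K)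
    (t₀ := 0) (a := -(r / 2)) (b := r / 2) (f := fun t => α x (s + t)) (g := fun t => α y t + w)
    (fun _ _ => hF.lipschitzOnWith) ⟨by linarith [hα.pos], by linarith [hα.pos]⟩
    (fun t ht => ⟨?_, trivial⟩) (fun t ht => ⟨?_, trivial⟩) ?_ ht
  · exact (hα.hasDerivAt x hx _ ⟨by linarith [ht.1], by linarith [ht.2]⟩).comp_const_add s t
  · rw [hw]
    have ht' : t ∈ Ioo (-r) r := ⟨by linarith [ht.1, hα.pos], by linarith [ht.2, hα.pos]⟩
    exact (hα.hasDerivAt y hy t ht').add_const w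
  · simp [hxy, hα.init y hy]

end IsLocalFlow

end LocalFlow

section TransportEquation

variable {E H : Type*} [NormedAddCommGroup E] [NormedSpace ℝ E] [NormedAddCommGroup H]
  [NormedSpace ℝ H] {F : E → E} {g : E → H} {ℓ : E →L[ℝ] ℝ} {z₀ : E}

/-- The solution of the transport equation `F v = g` with `v = 0` on the hyperplane `ℓ z = ℓ z₀`,
given by the method of characteristics: `α` is the flow of `(z, h) ↦ (F z, g z)`, which integrates
`g` along the flow of `F`, and `ℓ (z₀ - z)` is the time at which that flow takes `z` to the
hyperplane if `ℓ` increases with unit speed along `F`. -/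
def transportSolution (α : E × H → ℝ → E × H) (ℓ : E →L[ℝ] ℝ) (z₀ z : E) : H :=
  -(α (z, 0) (ℓ (z₀ - z))).2

lemma lipschitzNear_transportSolution {α : E × H → ℝ → E × H}
    (hα : LipschitzNear (Function.uncurry α) ((z₀, 0), 0)) :
    LipschitzNear (transportSolution α ℓ z₀) z₀ := by
  let start : E → (E × H) × ℝ := fun z => ((z, 0), ℓ (z₀ - z))
  have hstart : LipschitzNear start z₀ := .of_contDiffAt (by fun_prop)
  have hα' : LipschitzNear (Function.uncurry α) (start z₀) := by simpa [start] using hα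
  exact (LipschitzNear.of_contDiffAt (f := fun p : E × H => -p.2) (by fun_prop)).comp
    (hα'.comp hstart)

lemma transportSolution_flow {α : E × H → ℝ → E × H} {r : ℝ} {K : ℝ≥0}
    (hα : IsLocalFlow (fun p : E × H => (F p.1, g p.1)) α (z₀, 0) r)
    (hK : LipschitzWith K fun p : E × H => (F p.1, g p.1)) (hℓ : ∀ z, ℓ (F z) = 1) {z : E} {s : ℝ}
    (hz : (z, 0) ∈ Metric.ball (z₀, (0 : H)) r) (hs : |s| < r / 2)
    (hzs : ((α (z, 0) s).1, 0) ∈ Metric.ball (z₀, (0 : H)) r)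
    (hτ : |ℓ (z₀ - (α (z, 0) s).1)| < r / 2) :
    transportSolution α ℓ z₀ (α (z, 0) s).1 =
      transportSolution α ℓ z₀ z + (α (z, 0) s).2 := by
  have time_elapsed : ℓ (α (z, 0) s).1 = ℓ z + s := by
    rw [abs_lt] at hs
    exact hα.map_eq_add (ℓ := ℓ.comp (.fst ℝ E H)) (fun p => hℓ p.1) hz
      ⟨by linarith [hα.pos], by linarith [hα.pos]⟩
  have restart := hα.apply_add_of_translation hK (w := (0, (α (z, 0) s).2)) (by simp) hz hzs hs hτ
    (by simp)
  have hsum : s + ℓ (z₀ - (α (z, 0) s).1) = ℓ (z₀ - z) := by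
    simp only [map_sub, time_elapsed]; ring
  rw [hsum] at restart
  simp only [transportSolution, restart, Prod.snd_add, neg_add_rev, neg_add_cancel_comm]

lemma hasLineDerivAt_transportSolution {α : E × H → ℝ → E × H} {r : ℝ} {K : ℝ≥0}
    (hα : IsLocalFlow (fun p : E × H => (F p.1, g p.1)) α (z₀, 0) r)
    (hK : LipschitzWith K fun p : E × H => (F p.1, g p.1)) (hℓ : ∀ z, ℓ (F z) = 1)
    (hLip : LipschitzNear (transportSolution α ℓ z₀) z₀) :
    ∀ᶠ z in 𝓝 z₀, HasLineDerivAt ℝ (transportSolution α ℓ z₀) (g z) z (F z) := by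
  have admissible : ∀ᶠ z in 𝓝 z₀,
      (z, 0) ∈ Metric.ball (z₀, (0 : H)) r ∧ |ℓ (z₀ - z)| < r / 2 := by
    refine .and ?_ ?_
    · exact (by fun_prop : ContinuousAt (fun z : E => (z, (0 : H))) z₀).eventually_mem
        (Metric.ball_mem_nhds _ hα.pos)
    · exact (by fun_prop : ContinuousAt (fun z : E => |ℓ (z₀ - z)|) z₀).eventually_lt_const
        (by simpa using hα.pos)
  filter_upwards [admissible.eventually_nhds, hLip.eventually] with z hz hLipz
  have hinit : α (z, 0) 0 = (z, 0) := hα.init _ hz.self_of_nhds.1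
  have hflow : HasDerivAt (α (z, 0)) (F z, g z) 0 := by
    simpa [hinit] using hα.hasDerivAt _ hz.self_of_nhds.1 0 (by simp [hα.pos])
  have hflow₁ : HasDerivAt (fun s => (α (z, 0) s).1) (F z) 0 := hflow.fst
  have hflow₂ : HasDerivAt (fun s => (α (z, 0) s).2) (g z) 0 := hflow.snd
  have return_to_start : Tendsto (fun s => (α (z, 0) s).1) (𝓝 0) (𝓝 z) := by
    simpa only [ContinuousAt, hinit] using hflow₁.continuousAt
  have small_time : ∀ᶠ s : ℝ in 𝓝 0, |s| < r / 2 :=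
    continuous_abs.continuousAt.eventually_lt_const (by simpa using hα.pos)
  have along_flow : transportSolution α ℓ z₀ ∘ (fun s => (α (z, 0) s).1) =ᶠ[𝓝 0]
      fun s => transportSolution α ℓ z₀ z + (α (z, 0) s).2 := by
    filter_upwards [small_time, return_to_start.eventually hz] with s hs hzs
    exact transportSolution_flow hα hK hℓ hz.self_of_nhds.1 hs hzs.1 hzs.2
  simpa [hinit] using hasLineDerivAt_of_hasDerivAt_comp (by simpa [hinit] using hLipz) hflow₁
    ((hflow₂.const_add _).congr_of_eventuallyEq along_flow)

lemma exists_lipschitzNear_transport [CompleteSpace E] [CompleteSpace H] {KF Kg : ℝ≥0}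
    (hF : LipschitzWith KF F) (hg : LipschitzWith Kg g) (hℓ : ∀ z, ℓ (F z) = 1) (z₀ : E) :
    ∃ v : E → H, LipschitzNear v z₀ ∧ v z₀ = 0 ∧
      ∀ᶠ z in 𝓝 z₀, HasLineDerivAt ℝ v (g z) z (F z) := by
  have hG : LipschitzWith (max (KF * 1) (Kg * 1)) fun p : E × H => (F p.1, g p.1) :=
    (hF.comp .prod_fst).prodMk (hg.comp .prod_fst)
  obtain ⟨α, r, K, hα, hK⟩ := exists_isLocalFlow_lipschitzOnWith hG (z₀, 0)
  have hLip : LipschitzNear (transportSolution α ℓ z₀) z₀ :=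
    lipschitzNear_transportSolution (hα.lipschitzNear_uncurry hG.continuous hK)
  refine ⟨_, hLip, ?_, hasLineDerivAt_transportSolution hα hG hℓ hLip⟩
  simp [transportSolution, hα.init _ (Metric.mem_ball_self hα.pos)]

end TransportEquation

section LogarithmicMultiplier

lemma exists_lipschitzNear_transport_of_slope {f g : ℝ × ℝ → ℝ} {z₀ : ℝ × ℝ}
    (hf : LipschitzNear f z₀) (hg : LipschitzNear g z₀) :
    ∃ u : ℝ × ℝ → ℝ, LipschitzNear u z₀ ∧ u z₀ = 0 ∧
      ∀ᶠ z in 𝓝 z₀, HasLineDerivAt ℝ u (g z) z (1, f z) := by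
  obtain ⟨Kf, f', hf', hf_eq⟩ := hf.exists_lipschitzWith_eventuallyEq
  obtain ⟨Kg, g', hg', hg_eq⟩ := hg.exists_lipschitzWith_eventuallyEq
  obtain ⟨u, hu, hu₀, hline⟩ := exists_lipschitzNear_transport
    ((LipschitzWith.const (1 : ℝ)).prodMk hf') hg' (ℓ := .fst ℝ ℝ ℝ) (fun _ => rfl) z₀
  refine ⟨u, hu, hu₀, ?_⟩
  filter_upwards [hline, hf_eq, hg_eq] with z hz hfz hgz
  rwa [hfz, hgz] at hz

variable {P Q : ℝ × ℝ → ℝ}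

/-- `u` is a logarithmic multiplier of the vector field `(P, Q)` near the origin: the function
`y * exp u` is a first integral of `(P, Q)`. Here `h` is the derivative of `u` along `(P, Q)`. -/
structure IsLogMultiplier (P Q u h : ℝ × ℝ → ℝ) : Prop where
  lipschitzNear : LipschitzNear u 0
  map_zero : u 0 = 0
  eventually_continuousAt : ∀ᶠ z in 𝓝 0, ContinuousAt h z
  eventually_hasLineDerivAt : ∀ᶠ z in 𝓝 0, HasLineDerivAt ℝ u (h z) z (P z, Q z)
  eventually_eq_zero : ∀ᶠ z in 𝓝 (0 : ℝ × ℝ), Q z + h z * z.2 = 0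

lemma exists_isLogMultiplier (hP : ContDiffAt ℝ 2 P 0) (hQ : ContDiffAt ℝ 2 Q 0) (hP0 : P 0 ≠ 0)
    (hQ0 : ∀ᶠ x in 𝓝 (0 : ℝ), Q (x, 0) = 0) : ∃ u h, IsLogMultiplier P Q u h := by
  let f : ℝ × ℝ → ℝ := fun z => Q z / P z
  let g : ℝ × ℝ → ℝ := fun z => -hadamardQuotient f z
  have hf : ContDiffAt ℝ 2 f 0 := hQ.div hP hP0
  have hg : LipschitzNear g 0 :=
    (LipschitzNear.of_contDiffAt contDiff_neg.contDiffAt).comp (lipschitzNear_hadamardQuotient hf)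
  have g_mul_snd : ∀ᶠ z in 𝓝 (0 : ℝ × ℝ), f z + g z * z.2 = 0 := by
    filter_upwards [eventually_smul_hadamardQuotient (x := 0) hf,
      (continuous_fst.tendsto (0 : ℝ × ℝ)).eventually hQ0] with z hz hQz
    simp only [f, hQz, zero_div, sub_zero, smul_eq_mul] at hz
    simp only [f, g, ← hz]
    ring
  obtain ⟨u, hu, hu₀, hline⟩ := exists_lipschitzNear_transport_of_slope
    (.of_contDiffAt (hf.of_le one_le_two)) hg
  have P_ne_zero : ∀ᶠ z in 𝓝 0, P z ≠ 0 := hP.continuousAt.eventually_ne hP0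
  refine ⟨u, fun z => P z * g z, hu, hu₀, ?_, ?_, ?_⟩
  · filter_upwards [hP.eventually (by simp), hg.eventually] with z hPz hgz
    exact hPz.continuousAt.mul hgz.continuousAt
  · filter_upwards [hline, P_ne_zero] with z hz hPz
    simpa [f, mul_div_cancel₀ _ hPz] using hz.smul (P z)
  · filter_upwards [g_mul_snd, P_ne_zero] with z hz hPz
    calc Q z + P z * g z * z.2 = P z * (f z + g z * z.2) := by simp only [f]; field_simp
      _ = 0 := by rw [hz, mul_zero]

end LogarithmicMultiplier

section WeightedDilation

/-- The dilation of the plane by the factor `exp s`, for the weights `β` and `1` of the two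
coordinates. -/
noncomputable def weightedDilation (β s : ℝ) (z : ℝ × ℝ) : ℝ × ℝ :=
  (Real.exp (β * s) * z.1, Real.exp s * z.2)

lemma hasStrictFDerivAt_comp_lipschitzNear {E F H : Type*} [NormedAddCommGroup E] [NormedSpace ℝ E]
    [NormedAddCommGroup F] [NormedSpace ℝ F] [NormedAddCommGroup H] [NormedSpace ℝ H]
    {G : E × H → F} {f' : E →L[ℝ] F} {u : E → H} {x : E}
    (hG : HasStrictFDerivAt G (f'.comp (.fst ℝ E H)) (x, u x)) (hu : LipschitzNear u x) :
    HasStrictFDerivAt (fun z => G (z, u z)) f' x := by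
  obtain ⟨K, s, hs, hK⟩ := hu
  have graph_tendsto : Tendsto (fun z => (z, u z)) (𝓝 x) (𝓝 (x, u x)) :=
    continuousAt_id.prodMk (hK.continuousOn.continuousAt hs)
  have graph_isBigO : (fun p : E × E => (p.1, u p.1) - (p.2, u p.2)) =O[𝓝 (x, x)]
      fun p => p.1 - p.2 := by
    refine (Asymptotics.isBigO_refl _ _).prod_left (.of_bound K ?_)
    filter_upwards [prod_mem_nhds hs hs] with p hp
    exact hK.norm_sub_le hp.1 hp.2
  have hlittleO := hG.isLittleO.comp_tendsto (graph_tendsto.prodMap_nhds graph_tendsto)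
  exact .of_isLittleO (hlittleO.trans_isBigO graph_isBigO)

variable {β : ℝ} {u : ℝ × ℝ → ℝ}

lemma hasStrictFDerivAt_weightedDilation (hu : LipschitzNear u 0) (hu₀ : u 0 = 0) :
    HasStrictFDerivAt (fun z => weightedDilation β (u z) z) (.id ℝ (ℝ × ℝ)) 0 := by
  refine hasStrictFDerivAt_comp_lipschitzNear (G := fun p => weightedDilation β p.2 p.1) ?_ hu
  rw [hu₀]
  have hx := ((hasStrictFDerivAt_snd (𝕜 := ℝ) (p := ((0 : ℝ × ℝ), (0 : ℝ)))).const_mul β).exp.mul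
    hasStrictFDerivAt_fst.fst
  have hy := (hasStrictFDerivAt_snd (𝕜 := ℝ) (p := ((0 : ℝ × ℝ), (0 : ℝ)))).exp.mul
    hasStrictFDerivAt_fst.snd
  refine (hx.prodMk hy).congr_fderiv ?_
  ext <;> simp

lemma hasLineDerivAt_weightedDilation {h : ℝ} {z w : ℝ × ℝ} (hu : HasLineDerivAt ℝ u h z w) :
    HasLineDerivAt ℝ (fun z => weightedDilation β (u z) z)
      (weightedDilation β (u z) (w + h • (β * z.1, z.2))) z w := by
  have hline : HasDerivAt (fun s : ℝ => z + s • w) w 0 := by simpa using hasDerivAt_line z w 0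
  have hx := (HasDerivAt.const_mul β hu).exp.mul hline.fst
  have hy := (HasDerivAt.exp hu).mul hline.snd
  refine (hx.prodMk hy).congr_deriv (Prod.ext ?_ ?_)
  all_goals
    simp only [weightedDilation, zero_smul, add_zero, Prod.fst_add, Prod.snd_add, Prod.smul_fst,
      Prod.smul_snd, smul_eq_mul]
    ring

lemma orbitallyEquivAt_const_of_weightedDilation {δ P Q : ℝ × ℝ → ℝ}
    (hδ : ∀ s z, δ (weightedDilation β s z) = 0 ↔ δ z = 0) (hP : ContDiffAt ℝ 2 P 0)
    (hQ : ContDiffAt ℝ 2 Q 0) (hP0 : P 0 ≠ 0) (hQ0 : ∀ᶠ x in 𝓝 (0 : ℝ), Q (x, 0) = 0) :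
    OrbitallyEquivAt (fun z => (P z, Q z)) δ 0 (fun _ => (P 0, Q 0)) δ 0 := by
  obtain ⟨u, h, hu⟩ := exists_isLogMultiplier hP hQ hP0 hQ0
  let Φ : ℝ × ℝ → ℝ × ℝ := fun z => weightedDilation β (u z) z
  let μ : ℝ × ℝ → ℝ := fun z => Real.exp (β * u z) * (P z + h z * (β * z.1)) / P 0
  have hΦ : HasStrictFDerivAt Φ (ContinuousLinearEquiv.refl ℝ (ℝ × ℝ) : (ℝ × ℝ) →L[ℝ] ℝ × ℝ) 0 :=
    hasStrictFDerivAt_weightedDilation hu.lipschitzNear hu.map_zero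
  have hΦ₀ : Φ 0 = 0 := by simp [Φ, weightedDilation]
  have Q_zero : Q 0 = 0 := hQ0.self_of_nhds
  have hμ : ∀ᶠ z in 𝓝 0, ContinuousAt μ z := by
    filter_upwards [hP.eventually (by simp), hu.lipschitzNear.eventually,
      hu.eventually_continuousAt] with z hPz huz hhz
    have := hPz.continuousAt
    have := huz.continuousAt
    fun_prop
  have μ_zero : μ 0 = 1 := by simp [μ, hu.map_zero, hP0]
  have hpos : ∀ᶠ z in 𝓝 0, 0 < μ z :=
    hμ.self_of_nhds.eventually_const_lt (by simp [μ_zero])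
  have hline : ∀ᶠ z in 𝓝 0, HasLineDerivAt ℝ Φ (μ z • (P 0, Q 0)) z (P z, Q z) := by
    filter_upwards [hu.eventually_hasLineDerivAt, hu.eventually_eq_zero] with z huz hQz
    convert hasLineDerivAt_weightedDilation huz using 1
    ext
    · simp [μ, weightedDilation, hP0]
    · simp [weightedDilation, Q_zero, hQz]
  simpa only [hΦ₀] using
    orbitallyEquivAt_of_hasStrictFDerivAt hΦ (.of_forall fun z => hδ (u z) z) hμ hpos hline

lemma Dk_comp_weightedDilation (n : ℕ) (ε s : ℝ) (z : ℝ × ℝ) :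
    (weightedDilation ((n - 1) / 2) s z).1 ^ 2 * (weightedDilation ((n - 1) / 2) s z).2
      + ε * (weightedDilation ((n - 1) / 2) s z).2 ^ n
      = Real.exp (n * s) * (z.1 ^ 2 * z.2 + ε * z.2 ^ n) := by
  have weight_eq : Real.exp ((n - 1) / 2 * s) ^ 2 * Real.exp s = Real.exp s ^ n := by
    rw [← Real.exp_nat_mul, ← Real.exp_nat_mul, ← Real.exp_add]
    congr 1
    push_cast
    ring
  simp only [weightedDilation, mul_pow, Real.exp_nat_mul]
  linear_combination z.1 ^ 2 * z.2 * weight_eq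

end WeightedDilation

theorem Dk_case4_general (n : ℕ) (ε : ℝ) (P Q : ℝ × ℝ → ℝ)
    (hP : ContDiffAt ℝ 2 P (0, 0)) (hQ : ContDiffAt ℝ 2 Q (0, 0)) (hP0 : P (0, 0) ≠ 0)
    (hQ0 : ∀ᶠ x in 𝓝 (0 : ℝ), Q (x, 0) = 0) :
    OrbitallyEquivAt (fun z => (P z, Q z)) (fun z => z.1 ^ 2 * z.2 + ε * z.2 ^ n) (0, 0)
      (fun _ => (P (0, 0), Q (0, 0))) (fun z => z.1 ^ 2 * z.2 + ε * z.2 ^ n) (0, 0) := by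
  refine orbitallyEquivAt_const_of_weightedDilation (β := (n - 1) / 2) (fun s z => ?_) hP hQ hP0 hQ0
  rw [Dk_comp_weightedDilation, mul_eq_zero_iff_left (Real.exp_ne_zero _)]

/-- (`D_k`-type impasse curve, `k ≥ 4`, Case 4 of Table 2.)
If `δ(x,y) = x²y + ε·y^{k−1}` and `X = (P,Q)` is real-analytic near the origin with
`P(0,0) ≠ 0` and `Q(x,0) = 0` for all `x` near `0`, then `(X, δ)` is orientation-preserving
`C⁰`-orbitally equivalent at the origin to the system with constant adjoint vector field
`(P(0,0), Q(0,0))`. -/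
theorem Dk_case4 (k : ℕ) (hk : 4 ≤ k) (ε : ℝ) (hε : ε = 1 ∨ ε = -1)
    (P Q : ℝ × ℝ → ℝ)
    (hP : AnalyticAt ℝ P (0, 0)) (hQ : AnalyticAt ℝ Q (0, 0))
    (hP0 : P (0, 0) ≠ 0)
    (hQ0 : ∀ᶠ x in nhds (0 : ℝ), Q (x, 0) = 0) :
    OrbitallyEquivAt (fun z => (P z, Q z))
      (fun z => z.1 ^ 2 * z.2 + ε * z.2 ^ (k - 1)) (0, 0)
      (fun _ => (P (0, 0), Q (0, 0)))
      (fun z => z.1 ^ 2 * z.2 + ε * z.2 ^ (k - 1)) (0, 0) :=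
  Dk_case4_general (k - 1) ε P Q hP.contDiffAt hQ.contDiffAt hP0 hQ0
end

section
/- Let k ≥ 4 be an integer, ε ∈ {1, −1}, and δ(x, y) = x²y + ε·y^{k−1} (a D_k-type singular impasse curve). Let X = (P, Q) be real-analytic on a neighborhood of the origin in ℝ² with P(0,0) = 0, Q(0,0) ≠ 0, and such that (∂ⁿP/∂yⁿ)(0,0) = 0 for every integer n with 1 ≤ 2n ≤ k − 4 (equivalently, the order of vanishing n₀ of y ↦ P(0, y) at 0 satisfies k − 4 < 2n₀). Then the constrained system (X, δ) is orientation-preserving C⁰-orbitally equivalent at (0, 0) to the constrained system (Y, δ), where Y is the constant vector field Y ≡ (0, Q(0,0)). -/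
/-!
The orbits of `X = (P, Q)` run along the leaves of `dx/dy = P / Q`, in the direction given by the
sign of `Q(0, 0)`, and the flow of this equation straightens the leaves to vertical lines. The
impasse set consists of the leaf-transverse axis `y = 0` and, in those half planes `0 < y`, `y < 0`
where `-ε y ^ (k - 2)` is positive, of the branches `x = ± √|ε| |y| ^ ((k - 2) / 2)`. Flatness says
`P(0, y) = o(|y| ^ ((k - 4) / 2))`, so on the branches `P / Q` is small compared with their own
slope. Hence every leaf other than the one through the origin crosses the branches exactly once in
each of these half planes, at a height which depends continuously on the leaf. Sliding along
each vertical line by an increasing piecewise affine map moves these heights to those at which the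
vertical lines themselves cross the branches; this conjugates the impasse sets and keeps the
direction of orbits.
-/

open Set Filter Topology Asymptotics

/-! ### Straightening the integral curves of `dx/dy = v y x` -/

section Gronwall

variable {E : Type*} [NormedAddCommGroup E] [NormedSpace ℝ E] {w w' : ℝ → E} {C : ℝ}

lemma norm_right_le_mul_exp_of_norm_deriv_le {a b : ℝ} (hab : a ≤ b)
    (hw : ∀ t ∈ Icc a b, HasDerivWithinAt w (w' t) (Icc a b) t)
    (hC : ∀ t ∈ Icc a b, ‖w' t‖ ≤ C * ‖w t‖) :
    ‖w b‖ ≤ ‖w a‖ * Real.exp (C * (b - a)) := by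
  rw [← gronwallBound_ε0]
  refine norm_le_gronwallBound_of_norm_deriv_right_le (fun t ht => (hw t ht).continuousWithinAt)
    (fun t ht => ?_) le_rfl (fun t ht => by simpa using hC t (Ico_subset_Icc_self ht)) b
    (right_mem_Icc.2 hab)
  exact (hw t (Ico_subset_Icc_self ht)).mono_of_mem_nhdsWithin (Icc_mem_nhdsGE_of_mem ht)

lemma norm_left_le_mul_exp_of_norm_deriv_le {a b : ℝ} (hab : a ≤ b)
    (hw : ∀ t ∈ Icc a b, HasDerivWithinAt w (w' t) (Icc a b) t)
    (hC : ∀ t ∈ Icc a b, ‖w' t‖ ≤ C * ‖w t‖) :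
    ‖w a‖ ≤ ‖w b‖ * Real.exp (C * (b - a)) := by
  have hneg : MapsTo (Neg.neg : ℝ → ℝ) (Icc (-b) (-a)) (Icc a b) := fun t ht =>
    ⟨le_neg_of_le_neg ht.2, neg_le.1 ht.1⟩
  have hreflect : ∀ t ∈ Icc (-b) (-a),
      HasDerivWithinAt (fun t => w (-t)) (-w' (-t)) (Icc (-b) (-a)) t := fun t ht => by
    simpa [Function.comp_def] using
      (hw (-t) (hneg ht)).scomp t (hasDerivAt_neg t).hasDerivWithinAt hneg
  simpa [neg_add_eq_sub] using norm_right_le_mul_exp_of_norm_deriv_le (neg_le_neg hab) hreflect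
    fun t ht => by simpa using hC (-t) (hneg ht)

lemma norm_le_mul_exp_of_norm_deriv_le {J : Set ℝ} (hJ : J.OrdConnected)
    (hw : ∀ t ∈ J, HasDerivWithinAt w (w' t) J t) (hC : ∀ t ∈ J, ‖w' t‖ ≤ C * ‖w t‖)
    {t₀ t : ℝ} (ht₀ : t₀ ∈ J) (ht : t ∈ J) :
    ‖w t‖ ≤ ‖w t₀‖ * Real.exp (C * |t - t₀|) := by
  rcases le_total t₀ t with h | h
  · rw [abs_of_nonneg (sub_nonneg.2 h)]
    exact norm_right_le_mul_exp_of_norm_deriv_le h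
      (fun u hu => (hw u (hJ.out ht₀ ht hu)).mono (hJ.out ht₀ ht))
      fun u hu => hC u (hJ.out ht₀ ht hu)
  · rw [abs_sub_comm, abs_of_nonneg (sub_nonneg.2 h)]
    exact norm_left_le_mul_exp_of_norm_deriv_le h
      (fun u hu => (hw u (hJ.out ht ht₀ hu)).mono (hJ.out ht ht₀))
      fun u hu => hC u (hJ.out ht ht₀ hu)

end Gronwall

section GlobalFlow

variable {E : Type*} [NormedAddCommGroup E] [NormedSpace ℝ E] {v : ℝ → E → E} {K M : NNReal}

lemma exists_solution_on_Ioo [CompleteSpace E] (hK : ∀ y, LipschitzWith K (v y))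
    (hM : ∀ y x, ‖v y x‖ ≤ M) (hv : ∀ x, Continuous fun y => v y x) (x₀ : E) (t₀ : ℝ)
    {T : ℝ} (hT : 0 < T) :
    ∃ u : ℝ → E, u t₀ = x₀ ∧ ∀ t ∈ Ioo (t₀ - T) (t₀ + T), HasDerivAt u (v t (u t)) t := by
  lift T to NNReal using hT.le
  have hpl : IsPicardLindelof v (tmin := t₀ - T) (tmax := t₀ + T)
      ⟨t₀, sub_le_self _ T.2, le_add_of_nonneg_right T.2⟩ x₀ (M * T) 0 M K :=
    { lipschitzOnWith := fun t _ => (hK t).lipschitzOnWith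
      continuousOn := fun x _ => (hv x).continuousOn
      norm_le := fun t _ x _ => hM t x
      mul_max_le := by simp }
  obtain ⟨u, hu₀, hu⟩ := hpl.exists_eq_forall_mem_Icc_hasDerivWithinAt₀
  exact ⟨u, hu₀, fun t ht => (hu t (Ioo_subset_Icc_self ht)).hasDerivAt (Icc_mem_nhds ht.1 ht.2)⟩

lemma exists_global_solution [CompleteSpace E] (hK : ∀ y, LipschitzWith K (v y))
    (hM : ∀ y x, ‖v y x‖ ≤ M) (hv : ∀ x, Continuous fun y => v y x) (x₀ : E) (t₀ : ℝ) :
    ∃ u : ℝ → E, u t₀ = x₀ ∧ ∀ t, HasDerivAt u (v t (u t)) t := by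
  have hlocal := fun T : {T : ℝ // 0 < T} => exists_solution_on_Ioo hK hM hv x₀ t₀ T.2
  choose u hu₀ hu using hlocal
  have hagree : ∀ S T : {T : ℝ // 0 < T}, S ≤ T →
      EqOn (u S) (u T) (Ioo (t₀ - S) (t₀ + S)) := fun S T hST =>
    ODE_solution_unique_of_mem_Ioo (fun t _ => (hK t).lipschitzOnWith (s := univ))
      ⟨sub_lt_self _ S.2, lt_add_of_pos_right _ S.2⟩ (fun t ht => ⟨hu S t ht, mem_univ _⟩)
      (fun t ht => ⟨hu T t ⟨(sub_le_sub_left (Subtype.coe_le_coe.2 hST) _).trans_lt ht.1,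
        ht.2.trans_le (add_le_add_right (Subtype.coe_le_coe.2 hST) _)⟩, mem_univ _⟩)
      ((hu₀ S).trans (hu₀ T).symm)
  let R : ℝ → {T : ℝ // 0 < T} := fun t => ⟨|t - t₀| + 1, by positivity⟩
  have hmem : ∀ t, t ∈ Ioo (t₀ - R t) (t₀ + R t) := fun t => by
    rw [← Real.ball_eq_Ioo, Metric.mem_ball, Real.dist_eq]
    exact lt_add_one _
  refine ⟨fun t => u (R t) t, hu₀ _, fun t => ?_⟩
  refine (hu (R t) t (hmem t)).congr_of_eventuallyEq ?_
  filter_upwards [Ioo_mem_nhds (hmem t).1 (hmem t).2] with r hr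
  rcases le_total (R r) (R t) with h | h
  exacts [hagree _ _ h (hmem r), (hagree _ _ h hr).symm]

lemma norm_solution_sub_le (hM : ∀ y x, ‖v y x‖ ≤ M) {u : ℝ → E}
    (hu : ∀ t, HasDerivAt u (v t (u t)) t) (t t' : ℝ) : ‖u t - u t'‖ ≤ M * |t - t'| :=
  convex_univ.norm_image_sub_le_of_norm_hasDerivWithin_le
    (fun t _ => (hu t).hasDerivWithinAt) (fun t _ => hM t (u t)) (mem_univ _) (mem_univ _)

lemma norm_solution_sub_solution_le (hK : ∀ y, LipschitzWith K (v y)) {u u' : ℝ → E}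
    (hu : ∀ t, HasDerivAt u (v t (u t)) t) (hu' : ∀ t, HasDerivAt u' (v t (u' t)) t) (t₀ t : ℝ) :
    ‖u t - u' t‖ ≤ ‖u t₀ - u' t₀‖ * Real.exp (K * |t - t₀|) :=
  norm_le_mul_exp_of_norm_deriv_le (w := fun t => u t - u' t) ordConnected_univ
    (fun t _ => ((hu t).sub (hu' t)).hasDerivWithinAt)
    (fun t _ => (hK t).norm_sub_le _ _) (mem_univ _) (mem_univ _)

lemma continuous_flow (hK : ∀ y, LipschitzWith K (v y)) (hM : ∀ y x, ‖v y x‖ ≤ M)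
    {φ : E → ℝ → ℝ → E} (hφ₀ : ∀ x t₀, φ x t₀ t₀ = x)
    (hφ : ∀ x t₀ t, HasDerivAt (φ x t₀) (v t (φ x t₀ t)) t) :
    Continuous fun p : E × ℝ × ℝ => φ p.1 p.2.1 p.2.2 := by
  refine continuous_iff_continuousAt.2 fun ⟨x, t₀, t⟩ => ?_
  have hbound : Tendsto (fun p : E × ℝ × ℝ =>
      (‖p.1 - x‖ + M * |t₀ - p.2.1|) * Real.exp (K * |p.2.2 - t₀|) + M * |p.2.2 - t|)
      (𝓝 (x, t₀, t)) (𝓝 0) := by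
    refine Continuous.tendsto' (by fun_prop) _ _ (by simp)
  refine tendsto_iff_norm_sub_tendsto_zero.2
    (squeeze_zero (fun _ => norm_nonneg _) (fun ⟨x', t₀', t'⟩ => ?_) hbound)
  have hstart : ‖φ x' t₀' t₀ - φ x t₀ t₀‖ ≤ ‖x' - x‖ + M * |t₀ - t₀'| := by
    have := norm_solution_sub_le hM (hφ x' t₀') t₀ t₀'
    rw [hφ₀] at this ⊢
    exact (norm_sub_le_norm_sub_add_norm_sub _ x' _).trans (by linarith)
  calc ‖φ x' t₀' t' - φ x t₀ t‖
      ≤ ‖φ x' t₀' t' - φ x t₀ t'‖ + ‖φ x t₀ t' - φ x t₀ t‖ :=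
        norm_sub_le_norm_sub_add_norm_sub _ _ _
    _ ≤ (‖x' - x‖ + M * |t₀ - t₀'|) * Real.exp (K * |t' - t₀|) + M * |t' - t| := by
        gcongr
        · exact (norm_solution_sub_solution_le hK (hφ _ _) (hφ _ _) t₀ t').trans (by gcongr)
        · exact norm_solution_sub_le hM (hφ _ _) _ _

/-- `Θ` straightens the integral curves of the non-autonomous equation `dx/dy = v y x`: it maps
each vertical line `{s} × ℝ` onto the graph of the solution which takes the value `s` at
`y = 0`. -/
structure IsStraightening (v : ℝ → E → E) (Θ : E × ℝ ≃ₜ E × ℝ) : Prop where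
  snd_apply : ∀ z, (Θ z).2 = z.2
  apply_zero : ∀ s, Θ (s, 0) = (s, 0)
  hasDerivAt : ∀ s y, HasDerivAt (fun y => (Θ (s, y)).1) (v y (Θ (s, y)).1) y

lemma exists_isStraightening [CompleteSpace E] (hK : ∀ y, LipschitzWith K (v y))
    (hM : ∀ y x, ‖v y x‖ ≤ M) (hv : ∀ x, Continuous fun y => v y x) :
    ∃ Θ : E × ℝ ≃ₜ E × ℝ, IsStraightening v Θ := by
  choose φ hφ₀ hφ using exists_global_solution hK hM hv
  have hcont := continuous_flow hK hM hφ₀ hφ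
  have hflow : ∀ x t₀ t₁, φ (φ x t₀ t₁) t₁ = φ x t₀ := fun x t₀ t₁ =>
    ODE_solution_unique_univ (fun t => (hK t).lipschitzOnWith (s := univ))
      (fun t => ⟨hφ _ _ t, mem_univ _⟩) (fun t => ⟨hφ _ _ t, mem_univ _⟩) (hφ₀ _ _)
  exact ⟨{  toFun := fun z => (φ z.1 0 z.2, z.2)
            invFun := fun z => (φ z.1 z.2 0, z.2)
            left_inv := fun z => Prod.ext (by simp [hflow, hφ₀]) rfl
            right_inv := fun z => Prod.ext (by simp [hflow, hφ₀]) rfl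
            continuous_toFun := by fun_prop
            continuous_invFun := by fun_prop },
    fun _ => rfl, fun s => Prod.ext (hφ₀ s 0) rfl, fun s y => hφ s 0 y⟩

lemma isStraightening_refl : IsStraightening (fun _ (_ : E) => 0) (Homeomorph.refl (E × ℝ)) :=
  ⟨fun _ => rfl, fun _ => rfl, fun s y => hasDerivAt_const y s⟩

lemma IsStraightening.symm_snd {Θ : E × ℝ ≃ₜ E × ℝ} (hΘ : IsStraightening v Θ) (z : E × ℝ) :
    (Θ.symm z).2 = z.2 := by
  rw [← hΘ.snd_apply, Θ.apply_symm_apply]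

end GlobalFlow

namespace IsStraightening

variable {v : ℝ → ℝ → ℝ} {Θ : ℝ × ℝ ≃ₜ ℝ × ℝ}

lemma apply_fst_symm (hΘ : IsStraightening v Θ) (x y : ℝ) :
    Θ ((Θ.symm (x, y)).1, y) = (x, y) := by
  have hpair : ((Θ.symm (x, y)).1, y) = Θ.symm (x, y) := Prod.ext rfl (hΘ.symm_snd (x, y)).symm
  rw [hpair, Θ.apply_symm_apply]

lemma strictMono_fst (hΘ : IsStraightening v Θ) (y : ℝ) :
    StrictMono fun s => (Θ (s, y)).1 := fun s s' hs => by
  by_contra! hle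
  obtain ⟨r, hr⟩ := mem_range_of_exists_le_of_exists_ge
    (f := fun r => (Θ (s', r)).1 - (Θ (s, r)).1) (c := 0) (by fun_prop)
    ⟨y, sub_nonpos.2 hle⟩ ⟨0, by simpa [hΘ.apply_zero] using hs.le⟩
  have hmeet : Θ (s', r) = Θ (s, r) :=
    Prod.ext (sub_eq_zero.1 hr) (by rw [hΘ.snd_apply, hΘ.snd_apply])
  exact hs.ne' (congrArg Prod.fst (Θ.injective hmeet))

lemma abs_fst_symm_sub_le (hΘ : IsStraightening v Θ) {M : NNReal} (hM : ∀ y x, |v y x| ≤ M)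
    (x y : ℝ) : |(Θ.symm (x, y)).1 - x| ≤ M * |y| := by
  have := norm_solution_sub_le hM (hΘ.hasDerivAt (Θ.symm (x, y)).1) 0 y
  simpa [hΘ.apply_fst_symm, hΘ.apply_zero] using this

lemma neg_fst (hΘ : IsStraightening v Θ) :
    IsStraightening (fun y x => -v y (-x))
      ((((Homeomorph.neg ℝ).prodCongr (.refl ℝ)).trans Θ).trans
        ((Homeomorph.neg ℝ).prodCongr (.refl ℝ))) where
  snd_apply z := by simp [hΘ.snd_apply]
  apply_zero s := by simp [hΘ.apply_zero]
  hasDerivAt s y := (hΘ.hasDerivAt (-s) y).neg.congr_deriv (by simp)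

lemma neg_snd (hΘ : IsStraightening v Θ) :
    IsStraightening (fun y x => -v (-y) x)
      ((((Homeomorph.refl ℝ).prodCongr (.neg ℝ)).trans Θ).trans
        ((Homeomorph.refl ℝ).prodCongr (.neg ℝ))) where
  snd_apply z := by simp [hΘ.snd_apply]
  apply_zero s := by simp [hΘ.apply_zero]
  hasDerivAt s y := by
    simpa [Function.comp_def] using (hΘ.hasDerivAt s (-y)).scomp y (hasDerivAt_neg y)

end IsStraightening

/-! ### Orbits as monotone traversals of leaves -/

section PhaseCurves

/-- The planar vector field with vertical component `q` whose orbits are integral curves of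
`dx/dy = v y x`. -/
def slopeField (v : ℝ → ℝ → ℝ) (q : ℝ × ℝ → ℝ) (z : ℝ × ℝ) : ℝ × ℝ :=
  (v z.2 z.1 * q z, q z)

/-- A bounded continuous vertical speed that never vanishes and has the sign of the constant
`σ`, so that `σ` prescribes the direction in which phase curves of `slopeField v q` run. -/
structure IsDirectedSpeed (σ : ℝ) (q : ℝ × ℝ → ℝ) : Prop where
  continuous : Continuous q
  mul_pos : ∀ z, 0 < σ * q z
  bounded : ∃ B, ∀ z, |q z| ≤ B

/-- The curve `c` runs monotonically along a single leaf `Θ '' ({s} ×ˢ univ)`: upwards if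
`0 < σ`, downwards if `σ < 0`. -/
def IsLeafTraversal (Θ : ℝ × ℝ ≃ₜ ℝ × ℝ) (σ : ℝ) (J : Set ℝ) (c : ℝ → ℝ × ℝ) : Prop :=
  ∃ (s : ℝ) (y : ℝ → ℝ), ContinuousOn y J ∧ StrictMonoOn (fun t => σ * y t) J ∧
    ∀ t ∈ J, c t = Θ (s, y t)

/-- `Φ` carries every phase curve of `X` in `V` onto a phase curve of `Y` in `W`, up to a
continuous strictly increasing reparametrization: one of the two symmetric conditions of
`OrbitallyEquivAt`. -/
def CarriesPhaseCurves (X Y Φ : ℝ × ℝ → ℝ × ℝ) (V W : Set (ℝ × ℝ)) : Prop :=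
  ∀ (J : Set ℝ) (c : ℝ → ℝ × ℝ), IsPhaseCurve X V J c →
    ∃ (J' : Set ℝ) (d : ℝ → ℝ × ℝ) (τ : ℝ → ℝ), IsPhaseCurve Y W J' d ∧
      ContinuousOn τ J ∧ StrictMonoOn τ J ∧ τ '' J = J' ∧ ∀ t ∈ J, Φ (c t) = d (τ t)

variable {v v' : ℝ → ℝ → ℝ} {q q' : ℝ × ℝ → ℝ} {σ : ℝ} {Θ Θ' : ℝ × ℝ ≃ₜ ℝ × ℝ}
  {J : Set ℝ} {c : ℝ → ℝ × ℝ} {V W : Set (ℝ × ℝ)} {K : NNReal}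

lemma IsPhaseCurve.hasDerivWithinAt_fst (hc : IsPhaseCurve (slopeField v q) V J c) {t : ℝ}
    (ht : t ∈ J) : HasDerivWithinAt (fun t => (c t).1) (v (c t).2 (c t).1 * q (c t)) J t :=
  (hasFDerivAt_fst (𝕜 := ℝ) (p := c t)).comp_hasDerivWithinAt t (hc.2.2.2 t ht)

lemma IsPhaseCurve.hasDerivWithinAt_snd (hc : IsPhaseCurve (slopeField v q) V J c) {t : ℝ}
    (ht : t ∈ J) : HasDerivWithinAt (fun t => (c t).2) (q (c t)) J t :=
  (hasFDerivAt_snd (𝕜 := ℝ) (p := c t)).comp_hasDerivWithinAt t (hc.2.2.2 t ht)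

lemma IsPhaseCurve.eq_straightening_apply (hc : IsPhaseCurve (slopeField v q) V J c)
    (hΘ : IsStraightening v Θ) (hK : ∀ y, LipschitzWith K (v y)) {B : ℝ} (hB : ∀ z, |q z| ≤ B)
    {t₀ t : ℝ} (ht₀ : t₀ ∈ J) (ht : t ∈ J) : c t = Θ ((Θ.symm (c t₀)).1, (c t).2) := by
  set s := (Θ.symm (c t₀)).1
  have hdist : ∀ t ∈ J, HasDerivWithinAt (fun t => (c t).1 - (Θ (s, (c t).2)).1)
      ((v (c t).2 (c t).1 - v (c t).2 (Θ (s, (c t).2)).1) * q (c t)) J t := fun t ht => by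
    exact ((hc.hasDerivWithinAt_fst ht).sub ((hΘ.hasDerivAt s (c t).2).comp_hasDerivWithinAt t
      (hc.hasDerivWithinAt_snd ht))).congr_deriv (sub_mul _ _ _).symm
  have hgrowth := norm_le_mul_exp_of_norm_deriv_le (C := K * B) hc.1 hdist (fun t _ => by
    rw [norm_mul, mul_right_comm]
    gcongr
    exacts [(hK _).norm_sub_le _ _, hB _]) ht₀ ht
  have hstart : Θ (s, (c t₀).2) = c t₀ := hΘ.apply_fst_symm _ _
  rw [hstart, sub_self, norm_zero, zero_mul, norm_le_zero_iff, sub_eq_zero] at hgrowth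
  exact Prod.ext hgrowth (hΘ.snd_apply (s, (c t).2)).symm

lemma IsPhaseCurve.isLeafTraversal (hc : IsPhaseCurve (slopeField v q) V J c)
    (hΘ : IsStraightening v Θ) (hK : ∀ y, LipschitzWith K (v y)) (hq : IsDirectedSpeed σ q) :
    IsLeafTraversal Θ σ J c := by
  obtain ⟨B, hB⟩ := hq.bounded
  obtain ⟨t₀, ht₀⟩ := hc.2.1.nonempty
  have hcont : ContinuousOn (fun t => (c t).2) J := fun t ht =>
    (hc.hasDerivWithinAt_snd ht).continuousWithinAt
  refine ⟨_, _, hcont, ?_, fun t ht => hc.eq_straightening_apply hΘ hK hB ht₀ ht⟩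
  exact strictMonoOn_of_hasDerivWithinAt_pos hc.1.convex (hcont.const_mul σ)
    (fun t ht => ((hc.hasDerivWithinAt_snd (interior_subset ht)).mono interior_subset).const_mul σ)
    fun t _ => hq.mul_pos _

lemma exists_orderIso_hasDerivAt {u : ℝ → ℝ} (hu : Continuous u) (hpos : ∀ y, 0 < u y) {B : ℝ}
    (hB : ∀ y, u y ≤ B) : ∃ Y : ℝ ≃o ℝ, ∀ t, HasDerivAt Y (u (Y t)) t := by
  have hinv : Continuous fun y => (u y)⁻¹ := hu.inv₀ fun y => (hpos y).ne'
  let T : ℝ → ℝ := fun y => ∫ r in (0 : ℝ)..y, (u r)⁻¹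
  have hT : ∀ y, HasDerivAt T (u y)⁻¹ y := fun y =>
    intervalIntegral.integral_hasDerivAt_right (hinv.intervalIntegrable _ _)
      (hinv.stronglyMeasurableAtFilter _ _) hinv.continuousAt
  have hdiff : Differentiable ℝ T := fun y => (hT y).differentiableAt
  have hB₀ : 0 < B := (hpos 0).trans_le (hB 0)
  have hgrow : ∀ ⦃x y⦄, x ≤ y → B⁻¹ * (y - x) ≤ T y - T x :=
    mul_sub_le_image_sub_of_le_deriv hdiff (fun y => by
      rw [(hT y).deriv]
      exact inv_anti₀ (hpos y) (hB y))
  have hmono : StrictMono T := fun x y hxy =>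
    sub_pos.1 ((mul_pos (inv_pos.2 hB₀) (sub_pos.2 hxy)).trans_le (hgrow hxy.le))
  have hT₀ : T 0 = 0 := intervalIntegral.integral_same
  have hsurj : Function.Surjective T := hdiff.continuous.surjective
    (tendsto_atTop_mono' _ ((eventually_ge_atTop 0).mono fun y hy => by
      simpa [hT₀] using hgrow hy) (tendsto_id.const_mul_atTop (inv_pos.2 hB₀)))
    (tendsto_atBot_mono' _ ((eventually_le_atBot 0).mono fun y hy => by
      simpa [hT₀] using hgrow hy) (tendsto_id.const_mul_atBot (inv_pos.2 hB₀)))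
  let Y := (hmono.orderIsoOfSurjective T hsurj).symm
  refine ⟨Y, fun t => ?_⟩
  simpa using HasDerivAt.of_local_left_inverse Y.continuous.continuousAt (hT (Y t))
    (inv_ne_zero (hpos _).ne') (Eventually.of_forall Y.symm_apply_apply)

lemma IsLeafTraversal.exists_isPhaseCurve (hc : IsLeafTraversal Θ σ J c)
    (hΘ : IsStraightening v Θ) (hq : IsDirectedSpeed σ q) (hJ : J.OrdConnected)
    (hJ' : J.Nontrivial) :
    ∃ (J' : Set ℝ) (d : ℝ → ℝ × ℝ) (τ : ℝ → ℝ), IsPhaseCurve (slopeField v q) univ J' d ∧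
      ContinuousOn τ J ∧ StrictMonoOn τ J ∧ τ '' J = J' ∧ ∀ t ∈ J, c t = d (τ t) := by
  obtain ⟨s, y, hy, hmono, hcy⟩ := hc
  obtain ⟨B, hB⟩ := hq.bounded
  have hσ : σ ≠ 0 := left_ne_zero_of_mul (hq.mul_pos 0).ne'
  obtain ⟨Y, hY⟩ := exists_orderIso_hasDerivAt (u := fun r => σ * q (Θ (s, r / σ)))
    (continuous_const.mul (hq.continuous.comp (by fun_prop))) (fun r => hq.mul_pos _)
    (B := |σ| * B) fun r => by
      refine (le_abs_self _).trans ?_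
      rw [abs_mul]
      gcongr
      exact hB _
  have hτ : ContinuousOn (fun t => Y.symm (σ * y t)) J :=
    Y.symm.continuous.comp_continuousOn (hy.const_mul σ)
  have hτmono : StrictMonoOn (fun t => Y.symm (σ * y t)) J := fun t ht t' ht' h =>
    Y.symm.strictMono (hmono ht ht' h)
  refine ⟨_, fun r => Θ (s, Y r / σ), _, ⟨?_, ?_, fun _ _ => mem_univ _, fun r _ => ?_⟩,
    hτ, hτmono, rfl, fun t ht => ?_⟩
  · exact (hJ.isPreconnected.image _ hτ).ordConnected
  · exact hJ'.image_of_injOn hτmono.injOn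
  · have hheight : HasDerivAt (fun r => Y r / σ) (q (Θ (s, Y r / σ))) r :=
      ((hY r).div_const σ).congr_deriv (mul_div_cancel_left₀ _ hσ)
    refine (((hΘ.hasDerivAt s _).comp r hheight).prodMk hheight).hasDerivWithinAt.congr_deriv ?_
      |>.congr (fun r' _ => Prod.ext rfl (hΘ.snd_apply _)) (Prod.ext rfl (hΘ.snd_apply _))
    rw [slopeField, hΘ.snd_apply]
  · simp only [OrderIso.apply_symm_apply]
    rw [mul_div_cancel_left₀ _ hσ, hcy t ht]

/-- A homeomorphism of `S × ℝ` which maps every fibre `{s} × ℝ` onto itself by an increasing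
map. -/
structure IsFibrewiseIncreasing {S : Type*} [TopologicalSpace S] (G : S × ℝ ≃ₜ S × ℝ) :
    Prop where
  fst_apply : ∀ z, (G z).1 = z.1
  strictMono : ∀ s, StrictMono fun y => (G (s, y)).2

namespace IsFibrewiseIncreasing

variable {S : Type*} [TopologicalSpace S] {G G' : S × ℝ ≃ₜ S × ℝ}

lemma apply_eq (hG : IsFibrewiseIncreasing G) (s : S) (y : ℝ) : G (s, y) = (s, (G (s, y)).2) :=
  Prod.ext (hG.fst_apply _) rfl

lemma trans (hG : IsFibrewiseIncreasing G) (hG' : IsFibrewiseIncreasing G') :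
    IsFibrewiseIncreasing (G.trans G') where
  fst_apply z := (hG'.fst_apply _).trans (hG.fst_apply z)
  strictMono s y y' h := by
    simp only [Homeomorph.trans_apply]
    rw [hG.apply_eq s y, hG.apply_eq s y']
    exact hG'.strictMono s (hG.strictMono s h)

lemma symm (hG : IsFibrewiseIncreasing G) : IsFibrewiseIncreasing G.symm where
  fst_apply z := by rw [← hG.fst_apply, G.apply_symm_apply]
  strictMono s y y' h := by
    have hfibre : ∀ y, (s, (G.symm (s, y)).2) = G.symm (s, y) := fun y =>
      Prod.ext (by rw [← hG.fst_apply (G.symm (s, y)), G.apply_symm_apply]) rfl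
    rw [← (hG.strictMono s).lt_iff_lt]
    simpa only [hfibre, G.apply_symm_apply] using h

end IsFibrewiseIncreasing

lemma IsLeafTraversal.map {G : ℝ × ℝ ≃ₜ ℝ × ℝ} (hc : IsLeafTraversal Θ σ J c)
    (hG : IsFibrewiseIncreasing G) :
    IsLeafTraversal Θ' σ J fun t => Θ' (G (Θ.symm (c t))) := by
  obtain ⟨s, y, hy, hmono, hcy⟩ := hc
  refine ⟨s, fun t => (G (s, y t)).2, continuous_snd.comp_continuousOn
    (G.continuous.comp_continuousOn (continuousOn_const.prodMk hy)), fun t ht t' ht' h => ?_,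
    fun t ht => by simp only [hcy t ht, Θ.symm_apply_apply, ← hG.apply_eq]⟩
  have hlt : σ * y t < σ * y t' := hmono ht ht' h
  rcases lt_trichotomy σ 0 with hσ | rfl | hσ
  · exact mul_lt_mul_of_neg_left (hG.strictMono s ((mul_lt_mul_left_of_neg hσ).1 hlt)) hσ
  · simp at hlt
  · exact mul_lt_mul_of_pos_left (hG.strictMono s (lt_of_mul_lt_mul_left hlt hσ.le)) hσ

lemma IsFibrewiseIncreasing.carriesPhaseCurves {G : ℝ × ℝ ≃ₜ ℝ × ℝ}
    (hG : IsFibrewiseIncreasing G) (hΘ : IsStraightening v Θ) (hΘ' : IsStraightening v' Θ')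
    (hK : ∀ y, LipschitzWith K (v y)) (hq : IsDirectedSpeed σ q) (hq' : IsDirectedSpeed σ q') :
    CarriesPhaseCurves (slopeField v q) (slopeField v' q') (fun z => Θ' (G (Θ.symm z)))
      univ univ := fun _ _ hc =>
  ((hc.isLeafTraversal hΘ hK hq).map hG).exists_isPhaseCurve hΘ' hq' hc.1 hc.2.1

lemma CarriesPhaseCurves.congr_restrict {X X₀ Y Y₀ Φ : ℝ × ℝ → ℝ × ℝ}
    (h : CarriesPhaseCurves X Y Φ univ univ) (hX : EqOn X₀ X V) (hY : EqOn Y₀ Y W)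
    (hΦ : MapsTo Φ V W) : CarriesPhaseCurves X₀ Y₀ Φ V W := by
  rintro J c ⟨hJ, hJ', hcV, hc⟩
  obtain ⟨_, d, τ, ⟨hI, hI', -, hd⟩, hτ, hτmono, rfl, hΦc⟩ := h J c
    ⟨hJ, hJ', fun _ _ => mem_univ _, fun t ht => (hc t ht).congr_deriv (hX (hcV t ht))⟩
  have hdW : ∀ r ∈ τ '' J, d r ∈ W := by
    rintro _ ⟨t, ht, rfl⟩
    exact hΦc t ht ▸ hΦ (hcV t ht)
  exact ⟨_, d, τ, ⟨hI, hI', hdW, fun r hr => (hd r hr).congr_deriv (hY (hdW r hr)).symm⟩,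
    hτ, hτmono, rfl, hΦc⟩

end PhaseCurves

lemma orbitallyEquivAt_of_homeomorph {X X₀ Y : ℝ × ℝ → ℝ × ℝ} {δ γ : ℝ × ℝ → ℝ}
    {p₁ p₂ : ℝ × ℝ} (Φ : ℝ × ℝ ≃ₜ ℝ × ℝ) (hX : X₀ =ᶠ[𝓝 p₁] X) (hp : Φ p₁ = p₂)
    (hδ : ∀ z, γ (Φ z) = 0 ↔ δ z = 0) (hΦ : CarriesPhaseCurves X Y Φ univ univ)
    (hΦsymm : CarriesPhaseCurves Y X Φ.symm univ univ) : OrbitallyEquivAt X₀ δ p₁ Y γ p₂ := by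
  obtain ⟨V, hV, hVo, hpV⟩ := eventually_nhds_iff.1 hX
  have hmaps : MapsTo Φ (V \ {z | δ z = 0}) (Φ '' V \ {z | γ z = 0}) := fun z hz =>
    ⟨mem_image_of_mem Φ hz.1, fun h => hz.2 ((hδ z).1 h)⟩
  have hmaps_symm : MapsTo Φ.symm (Φ '' V \ {z | γ z = 0}) (V \ {z | δ z = 0}) := by
    rintro _ ⟨⟨z, hz, rfl⟩, hγ⟩
    rw [Φ.symm_apply_apply]
    exact ⟨hz, fun h => hγ ((hδ z).2 h)⟩
  have hXV : EqOn X₀ X (V \ {z | δ z = 0}) := fun z hz => hV z hz.1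
  refine ⟨V, Φ '' V, Φ, Φ.symm, hVo, Φ.isOpenMap V hVo, hpV, ⟨p₁, hpV, hp⟩,
    Φ.continuous.continuousOn, Φ.symm.continuous.continuousOn, mapsTo_image _ _, ?_,
    fun z _ => Φ.symm_apply_apply z, fun z _ => Φ.apply_symm_apply z, hp, ?_,
    hΦ.congr_restrict hXV (eqOn_refl _ _) hmaps,
    hΦsymm.congr_restrict (eqOn_refl _ _) hXV hmaps_symm⟩
  · rintro _ ⟨z, hz, rfl⟩
    rwa [Φ.symm_apply_apply]
  · rw [show {z | δ z = 0} = Φ ⁻¹' {z | γ z = 0} from ext fun z => (hδ z).symm,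
      image_preimage_inter]

/-! ### Sliding along the fibres of `S × ℝ` -/

section Stretch

/-- The piecewise affine map of `ℝ` which is the identity on `Iic 0`, maps `[0, p]` linearly onto
`[0, q]`, and is a translation on `Ici p`. For `p = q = 0` the quotient is `0 / 0 = 0`, but its
coefficient vanishes and the map is the identity. -/
noncomputable def stretch (p q y : ℝ) : ℝ := y + (q / p - 1) * max 0 (min y p)

variable {p q y : ℝ}

lemma stretch_of_nonpos (hy : y ≤ 0) : stretch p q y = y := by
  simp [stretch, (min_le_left y p).trans hy]

lemma stretch_of_mem_Icc (hy : y ∈ Icc 0 p) : stretch p q y = q / p * y := by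
  rw [stretch, min_eq_left hy.2, max_eq_right hy.1]
  ring

lemma stretch_of_le (hp : 0 ≤ p) (hpq : p = 0 → q = 0) (hy : p ≤ y) :
    stretch p q y = y + (q - p) := by
  rw [stretch, min_eq_right hy, max_eq_right hp, sub_one_mul, div_mul_cancel_of_imp hpq]

lemma stretch_self (hp : 0 ≤ p) (hpq : p = 0 → q = 0) : stretch p q p = q := by
  rw [stretch_of_le hp hpq le_rfl, add_sub_cancel]

lemma stretch_stretch (hp : 0 ≤ p) (hq : 0 ≤ q) (hpq : p = 0 ↔ q = 0) (y : ℝ) :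
    stretch q p (stretch p q y) = y := by
  rcases le_or_gt y 0 with hy | hy
  · rw [stretch_of_nonpos hy, stretch_of_nonpos hy]
  rcases le_total y p with hyp | hyp
  · have hp₀ : 0 < p := hy.trans_le hyp
    have hq₀ : q ≠ 0 := mt hpq.2 hp₀.ne'
    have hmem : q / p * y ∈ Icc 0 q :=
      ⟨by positivity, (mul_le_mul_of_nonneg_left hyp (by positivity)).trans_eq
        (div_mul_cancel₀ q hp₀.ne')⟩
    rw [stretch_of_mem_Icc ⟨hy.le, hyp⟩, stretch_of_mem_Icc hmem]
    field_simp
  · rw [stretch_of_le hp hpq.1 hyp, stretch_of_le hq hpq.2 (by linarith)]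
    ring

lemma strictMono_stretch (hp : 0 ≤ p) (hq : 0 ≤ q) (hpq : p = 0 ↔ q = 0) :
    StrictMono (stretch p q) := by
  have hcont : Continuous (stretch p q) := by unfold stretch; fun_prop
  refine (hcont.strictMono_of_inj
    (Function.LeftInverse.injective (stretch_stretch hp hq hpq))).resolve_right fun h => ?_
  have := h neg_one_lt_zero
  rw [stretch_of_nonpos le_rfl, stretch_of_nonpos (by norm_num)] at this
  linarith

lemma abs_stretch_sub_le (hp : 0 ≤ p) (hq : 0 ≤ q) (y : ℝ) : |stretch p q y - y| ≤ p + q := by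
  have hclamp : |max 0 (min y p)| ≤ p := by
    rw [abs_of_nonneg (le_max_left _ _)]
    exact max_le hp (min_le_right _ _)
  have hslope : |q / p - 1| ≤ q / p + 1 :=
    abs_sub_le_of_nonneg_of_le (by positivity) (by linarith) zero_le_one
      (by linarith [div_nonneg hq hp])
  calc |stretch p q y - y| = |q / p - 1| * |max 0 (min y p)| := by
        rw [stretch, add_sub_cancel_left, abs_mul]
    _ ≤ (q / p + 1) * p := by gcongr
    _ = p / p * q + p := by ring
    _ ≤ p + q := by linarith [mul_le_of_le_one_left hq (div_self_le_one p)]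

/-- Two continuous functions `P, Q ≥ 0` with the same zeros, so that
`fun (s, y) => (s, stretch (P s) (Q s) y)` is a homeomorphism carrying the graph of `P` to the
graph of `Q`. -/
structure IsStretchPair {S : Type*} [TopologicalSpace S] (P Q : S → ℝ) : Prop where
  continuous_left : Continuous P
  continuous_right : Continuous Q
  nonneg_left : ∀ s, 0 ≤ P s
  nonneg_right : ∀ s, 0 ≤ Q s
  eq_zero_iff : ∀ s, P s = 0 ↔ Q s = 0

variable {S : Type*} [TopologicalSpace S] {P Q P' Q' : S → ℝ}

lemma IsStretchPair.symm (h : IsStretchPair P Q) : IsStretchPair Q P :=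
  ⟨h.continuous_right, h.continuous_left, h.nonneg_right, h.nonneg_left,
    fun s => (h.eq_zero_iff s).symm⟩

lemma IsStretchPair.continuous_stretch (h : IsStretchPair P Q) :
    Continuous fun z : S × ℝ => stretch (P z.1) (Q z.1) z.2 := by
  have hP := h.continuous_left
  have hQ := h.continuous_right
  refine continuous_iff_continuousAt.2 fun ⟨s, y⟩ => ?_
  by_cases hs : P s = 0
  · have hsmall : Tendsto (fun z : S × ℝ => P z.1 + Q z.1) (𝓝 (s, y)) (𝓝 0) :=
      Continuous.tendsto' (by fun_prop) _ _ (by simp [hs, (h.eq_zero_iff s).1 hs])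
    have hdiff : Tendsto (fun z : S × ℝ => stretch (P z.1) (Q z.1) z.2 - z.2) (𝓝 (s, y)) (𝓝 0) :=
      squeeze_zero_norm (fun _ => abs_stretch_sub_le (h.nonneg_left _) (h.nonneg_right _) _) hsmall
    have hlimit : stretch (P s) (Q s) y = 0 + y := by simp [stretch, hs]
    simpa only [ContinuousAt, hlimit, sub_add_cancel] using hdiff.add continuous_snd.continuousAt
  · have hdiv : ContinuousAt (fun z : S × ℝ => Q z.1 / P z.1) (s, y) :=
      (hQ.comp continuous_fst).continuousAt.div (hP.comp continuous_fst).continuousAt hs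
    exact continuous_snd.continuousAt.add ((hdiv.sub continuousAt_const).mul (by fun_prop))

lemma IsStretchPair.leftInverse (h : IsStretchPair P Q) :
    Function.LeftInverse (fun z : S × ℝ => (z.1, stretch (Q z.1) (P z.1) z.2))
      fun z => (z.1, stretch (P z.1) (Q z.1) z.2) := fun _ =>
  Prod.ext rfl (stretch_stretch (h.nonneg_left _) (h.nonneg_right _) (h.eq_zero_iff _) _)

lemma IsStretchPair.exists_isFibrewiseIncreasing (h : IsStretchPair P Q) :
    ∃ G : S × ℝ ≃ₜ S × ℝ, IsFibrewiseIncreasing G ∧ (∀ s y, y ≤ 0 → G (s, y) = (s, y)) ∧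
      ∀ s, G (s, P s) = (s, Q s) :=
  ⟨{  toFun := fun z => (z.1, stretch (P z.1) (Q z.1) z.2)
      invFun := fun z => (z.1, stretch (Q z.1) (P z.1) z.2)
      left_inv := h.leftInverse
      right_inv := h.symm.leftInverse
      continuous_toFun := continuous_fst.prodMk h.continuous_stretch
      continuous_invFun := continuous_fst.prodMk h.symm.continuous_stretch },
    ⟨fun _ => rfl, fun s => strictMono_stretch (h.nonneg_left s) (h.nonneg_right s)
      (h.eq_zero_iff s)⟩,
    fun _ _ hy => Prod.ext rfl (stretch_of_nonpos hy),
    fun s => Prod.ext rfl (stretch_self (h.nonneg_left s) (h.eq_zero_iff s).1)⟩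

lemma IsFibrewiseIncreasing.neg_snd {G : S × ℝ ≃ₜ S × ℝ} (hG : IsFibrewiseIncreasing G) :
    IsFibrewiseIncreasing ((((Homeomorph.refl S).prodCongr (.neg ℝ)).trans G).trans
      ((Homeomorph.refl S).prodCongr (.neg ℝ))) where
  fst_apply _ := hG.fst_apply _
  strictMono s _ _ h := neg_lt_neg (hG.strictMono s (neg_lt_neg h))

lemma exists_isFibrewiseIncreasing_two_sided (h : IsStretchPair P Q) (h' : IsStretchPair P' Q') :
    ∃ G : S × ℝ ≃ₜ S × ℝ, IsFibrewiseIncreasing G ∧ (∀ s, G (s, 0) = (s, 0)) ∧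
      (∀ s, G (s, P s) = (s, Q s)) ∧ ∀ s, G (s, -P' s) = (s, -Q' s) := by
  obtain ⟨G, hG, hG_below, hGP⟩ := h.exists_isFibrewiseIncreasing
  obtain ⟨H, hH, hH_below, hHP⟩ := h'.exists_isFibrewiseIncreasing
  refine ⟨_, hG.trans hH.neg_snd, fun s => ?_, fun s => ?_, fun s => ?_⟩
  · simp [hG_below s 0 le_rfl, hH_below s 0 le_rfl]
  · simp [hGP, hH_below s (-Q s) (neg_nonpos.2 (h.nonneg_right s))]
  · simp [hG_below s (-P' s) (neg_nonpos.2 (h'.nonneg_left s)), hHP]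

end Stretch

/-! ### Crossings of the leaves with a transverse branch -/

lemma lt_of_deriv_right_lt_deriv_boundary {f f' B B' : ℝ → ℝ} {a b : ℝ} (hab : a < b)
    (hf : ∀ x ∈ Icc a b, HasDerivAt f (f' x) x) (hB : ∀ x ∈ Icc a b, HasDerivAt B (B' x) x)
    (ha : f a ≤ B a) (hcross : ∀ x ∈ Icc a b, f x = B x → f' x < B' x) : f b < B b := by
  have hle : ∀ x ∈ Icc a b, f x ≤ B x := image_le_of_deriv_right_lt_deriv_boundary'
    (fun x hx => (hf x hx).continuousAt.continuousWithinAt)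
    (fun x hx => (hf x (Ico_subset_Icc_self hx)).hasDerivWithinAt) ha
    (fun x hx => (hB x hx).continuousAt.continuousWithinAt)
    (fun x hx => (hB x (Ico_subset_Icc_self hx)).hasDerivWithinAt)
    (fun x hx => hcross x (Ico_subset_Icc_self hx))
  have hb : b ∈ Icc a b := right_mem_Icc.2 hab.le
  refine (hle b hb).lt_of_ne fun heq => ?_
  have hsign := eventually_nhdsWithin_sign_eq_of_deriv_pos (f := B - f) (x₀ := b)
    (by rw [((hB b hb).sub (hf b hb)).deriv]; exact sub_pos.2 (hcross b hb heq))
    (sub_eq_zero.2 heq.symm)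
  obtain ⟨x, hxs, hx, hxb⟩ := ((eventually_nhdsWithin_of_eventually_nhds hsign).and
    ((eventually_mem_set.2 (Icc_mem_nhdsLT hab)).and self_mem_nhdsWithin)).exists
  rw [sign_neg (sub_neg.2 (mem_Iio.1 hxb)), sign_eq_neg_one_iff] at hxs
  exact (sub_nonneg.2 (hle x hx)).not_gt hxs

lemma strictMonoOn_Ici_of_Ioi {f : ℝ → ℝ} {a : ℝ} (hf : StrictMonoOn f (Ioi a))
    (ha : ContinuousWithinAt f (Ioi a) a) : StrictMonoOn f (Ici a) := by
  rw [← Ioi_insert, strictMonoOn_insert_iff_of_forall_ge fun x hx => (mem_Ioi.1 hx).le]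
  refine ⟨fun b hb _ => ?_, hf⟩
  obtain ⟨m, ham, hmb⟩ := exists_between (mem_Ioi.1 hb)
  have hle : f a ≤ f m := le_of_tendsto ha <| by
    filter_upwards [Ioo_mem_nhdsGT ham] with x hx using (hf hx.1 ham hx.2).le
  exact hle.trans_lt (hf ham hb hmb)

/-- The curves `x = b y` and `x = -b y` issuing from the origin are transverse branches for
`dx/dy = v y x`: as `|y|` increases, solutions can only cross them from the outside `|x| > b y`
to the inside, since on them `|v|` is below the slope `b'` of `b`. The last field is the growth
which makes every solution with `x ≠ 0` at `y = 0` cross; `b'` is only meaningful on `Ioi 0`. -/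
structure IsTransverseBranch (v : ℝ → ℝ → ℝ) (M : NNReal) (b b' : ℝ → ℝ) : Prop where
  bound : ∀ y x, |v y x| ≤ M
  continuous : Continuous b
  even : b.Even
  nonneg : ∀ y, 0 ≤ b y
  apply_zero : b 0 = 0
  hasDerivAt : ∀ y, 0 < y → HasDerivAt b (b' y) y
  abs_lt_deriv : ∀ y x, y ≠ 0 → |x| = b y → |v y x| < b' |y|
  tendsto : Tendsto (fun y => b y - M * y) atTop atTop

namespace IsTransverseBranch

variable {v : ℝ → ℝ → ℝ} {M : NNReal} {b b' : ℝ → ℝ} {Θ : ℝ × ℝ ≃ₜ ℝ × ℝ}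

lemma neg_fst (hb : IsTransverseBranch v M b b') :
    IsTransverseBranch (fun y x => -v y (-x)) M b b' :=
  { hb with
    bound := fun y x => by simpa only [abs_neg] using hb.bound y (-x)
    abs_lt_deriv := fun y x hy hx => by
      simpa only [abs_neg] using hb.abs_lt_deriv y (-x) hy (by rwa [abs_neg]) }

lemma neg_snd (hb : IsTransverseBranch v M b b') :
    IsTransverseBranch (fun y x => -v (-y) x) M b b' :=
  { hb with
    bound := fun y x => by simpa only [abs_neg] using hb.bound (-y) x
    abs_lt_deriv := fun y x hy hx => by
      simpa only [abs_neg] using hb.abs_lt_deriv (-y) x (neg_ne_zero.2 hy) (by rwa [hb.even]) }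

lemma zero (hb : IsTransverseBranch v M b b') : IsTransverseBranch (fun _ _ => 0) M b b' :=
  { hb with
    bound := fun _ _ => by simp
    abs_lt_deriv := fun y x hy hx => by
      simpa only [abs_zero] using (abs_nonneg _).trans_lt (hb.abs_lt_deriv y x hy hx) }

lemma strictMonoOn_fst_symm (hb : IsTransverseBranch v M b b') (hΘ : IsStraightening v Θ) :
    StrictMonoOn (fun y => (Θ.symm (b y, y)).1) (Ici 0) := by
  have hcont := hb.continuous
  refine strictMonoOn_Ici_of_Ioi (fun y₁ h₁ y₂ _ h => ?_) (by fun_prop)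
  have hpos : ∀ y ∈ Icc y₁ y₂, 0 < y := fun y hy => (mem_Ioi.1 h₁).trans_le hy.1
  have hbelow := lt_of_deriv_right_lt_deriv_boundary h
    (fun y _ => hΘ.hasDerivAt (Θ.symm (b y₁, y₁)).1 y)
    (fun y hy => hb.hasDerivAt y (hpos y hy)) (by rw [hΘ.apply_fst_symm])
    (fun y hy hmeet => by
      rw [hmeet]
      have := hb.abs_lt_deriv y (b y) (hpos y hy).ne' (abs_of_nonneg (hb.nonneg y))
      rw [abs_of_pos (hpos y hy)] at this
      exact (le_abs_self _).trans_lt this)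
  refine (hΘ.strictMono_fst y₂).lt_iff_lt.1 ?_
  simpa only [hΘ.apply_fst_symm] using hbelow

lemma exists_orderIso_right (hb : IsTransverseBranch v M b b') (hΘ : IsStraightening v Θ) :
    ∃ A : ℝ ≃o ℝ, A 0 = 0 ∧ ∀ s y, 0 < y → ((Θ (s, y)).1 = b y ↔ y = A.symm s) := by
  have hcont := hb.continuous
  let a : ℝ → ℝ := fun y => (Θ.symm (b y, y)).1
  let A : ℝ → ℝ := fun y => a (max y 0) + min y 0
  have ha₀ : a 0 = 0 := by
    have : Θ.symm (0, 0) = (0, 0) := by rw [Homeomorph.symm_apply_eq, hΘ.apply_zero]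
    simp [a, hb.apply_zero, this]
  have hA_nonneg : ∀ y ∈ Ici (0 : ℝ), A y = a y := fun y hy => by
    simp [A, mem_Ici.1 hy]
  have hA_nonpos : ∀ y ∈ Iic (0 : ℝ), A y = y := fun y hy => by
    simp [A, mem_Iic.1 hy, ha₀]
  have hA_cont : Continuous A := by fun_prop
  have hA_mono : StrictMono A := StrictMonoOn.Iic_union_Ici
    (strictMono_id.strictMonoOn _ |>.congr fun y hy => (hA_nonpos y hy).symm)
    ((hb.strictMonoOn_fst_symm hΘ).congr fun y hy => (hA_nonneg y hy).symm)
  have hA_top : Tendsto A atTop atTop := tendsto_atTop_mono' _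
    ((eventually_ge_atTop 0).mono fun y hy => by
      rw [hA_nonneg y hy]
      have := (abs_le.1 (hΘ.abs_fst_symm_sub_le hb.bound (b y) y)).1
      rw [abs_of_nonneg hy] at this
      linarith) hb.tendsto
  have hA_bot : Tendsto A atBot atBot := tendsto_id.congr'
    ((eventually_le_atBot 0).mono fun y hy => (hA_nonpos y hy).symm)
  refine ⟨hA_mono.orderIsoOfSurjective A (hA_cont.surjective hA_top hA_bot),
    (hA_nonpos 0 self_mem_Iic), fun s y hy => ?_⟩
  rw [OrderIso.eq_symm_apply, StrictMono.coe_orderIsoOfSurjective, hA_nonneg y hy.le,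
    ← (hΘ.strictMono_fst y).injective.eq_iff (a := a y), hΘ.apply_fst_symm, eq_comm]

lemma exists_height_upper (hb : IsTransverseBranch v M b b') (hΘ : IsStraightening v Θ) :
    ∃ p : ℝ → ℝ, Continuous p ∧ (∀ s, 0 ≤ p s) ∧ (∀ s, p s = 0 ↔ s = 0) ∧
      ∀ s y, 0 < y → (|(Θ (s, y)).1| = b y ↔ y = p s) := by
  obtain ⟨A, hA₀, hA⟩ := hb.exists_orderIso_right hΘ
  obtain ⟨A', hA'₀, hA'⟩ := hb.neg_fst.exists_orderIso_right hΘ.neg_fst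
  have hA_symm : A.symm 0 = 0 := A.symm_apply_eq.2 hA₀.symm
  have hA'_symm : A'.symm 0 = 0 := A'.symm_apply_eq.2 hA'₀.symm
  have hleft : ∀ s y, 0 < y → ((Θ (s, y)).1 = -b y ↔ y = A'.symm (-s)) := fun s y hy => by
    simpa [neg_eq_iff_eq_neg] using hA' (-s) y hy
  refine ⟨fun s => max (A.symm s) (A'.symm (-s)),
    A.symm.continuous.max (A'.symm.continuous.comp continuous_neg), ?_⟩
  suffices hp : ∀ s, 0 ≤ max (A.symm s) (A'.symm (-s)) ∧
      (max (A.symm s) (A'.symm (-s)) = 0 ↔ s = 0) ∧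
      ∀ y, 0 < y → (|(Θ (s, y)).1| = b y ↔ y = max (A.symm s) (A'.symm (-s))) from
    ⟨fun s => (hp s).1, fun s => (hp s).2.1, fun s => (hp s).2.2⟩
  intro s
  simp +contextual only [abs_eq (hb.nonneg _), hA, hleft]
  rcases lt_trichotomy s 0 with hs | rfl | hs
  · have h : A.symm s < 0 := hA_symm ▸ A.symm.strictMono hs
    have h' : 0 < A'.symm (-s) := hA'_symm ▸ A'.symm.strictMono (neg_pos.2 hs)
    rw [max_eq_right (h.trans h').le]
    exact ⟨h'.le, iff_of_false h'.ne' hs.ne,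
      fun y hy => or_iff_right fun hy' => (hy'.trans_lt h).not_gt hy⟩
  · simp [hA_symm, hA'_symm]
  · have h : 0 < A.symm s := hA_symm ▸ A.symm.strictMono hs
    have h' : A'.symm (-s) < 0 := hA'_symm ▸ A'.symm.strictMono (neg_neg_of_pos hs)
    rw [max_eq_left (h'.trans h).le]
    exact ⟨h.le, iff_of_false h.ne' hs.ne',
      fun y hy => or_iff_left fun hy' => (hy'.trans_lt h').not_gt hy⟩

end IsTransverseBranch

lemma IsFibrewiseIncreasing.sign_snd {S : Type*} [TopologicalSpace S] {G : S × ℝ ≃ₜ S × ℝ}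
    (hG : IsFibrewiseIncreasing G) {s : S} (hs : G (s, 0) = (s, 0)) (y : ℝ) :
    SignType.sign (G (s, y)).2 = SignType.sign y := by
  have hzero : (G (s, 0)).2 = 0 := congrArg Prod.snd hs
  rcases lt_trichotomy y 0 with hy | rfl | hy
  · rw [sign_neg hy, sign_neg (hzero ▸ hG.strictMono s hy)]
  · rw [hzero]
  · rw [sign_pos hy, sign_pos (hzero ▸ hG.strictMono s hy)]

lemma IsTransverseBranch.exists_straightening_branch {v : ℝ → ℝ → ℝ} {M : NNReal} {b b' : ℝ → ℝ}
    {Θ : ℝ × ℝ ≃ₜ ℝ × ℝ} (hb : IsTransverseBranch v M b b') (hΘ : IsStraightening v Θ) :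
    ∃ G : ℝ × ℝ ≃ₜ ℝ × ℝ, IsFibrewiseIncreasing G ∧ (∀ s, G (s, 0) = (s, 0)) ∧
      ∀ s y, y ≠ 0 → (|s| = b (G (s, y)).2 ↔ |(Θ (s, y)).1| = b y) := by
  obtain ⟨p, hp_cont, hp_nonneg, hp_zero, hp⟩ := hb.exists_height_upper hΘ
  obtain ⟨p', hp'_cont, hp'_nonneg, hp'_zero, hp'⟩ := hb.neg_snd.exists_height_upper hΘ.neg_snd
  obtain ⟨q, hq_cont, hq_nonneg, hq_zero, hq⟩ :=
    hb.zero.exists_height_upper isStraightening_refl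
  obtain ⟨G, hG, hG_zero, hGp, hGp'⟩ := exists_isFibrewiseIncreasing_two_sided
    ⟨hp_cont, hq_cont, hp_nonneg, hq_nonneg, fun s => (hp_zero s).trans (hq_zero s).symm⟩
    ⟨hp'_cont, hq_cont, hp'_nonneg, hq_nonneg, fun s => (hp'_zero s).trans (hq_zero s).symm⟩
  refine ⟨G, hG, hG_zero, fun s y hy => ?_⟩
  have hq : ∀ y, 0 < y → (|s| = b y ↔ y = q s) := hq s
  have hinj := (hG.strictMono s).injective
  have hsign := hG.sign_snd (hG_zero s) y
  rcases hy.lt_or_gt with hy | hy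
  · have hneg : (G (s, y)).2 < 0 := sign_eq_neg_one_iff.1 (hsign.trans (sign_neg hy))
    calc |s| = b (G (s, y)).2 ↔ (G (s, y)).2 = -q s := by
          rw [← hb.even, hq _ (neg_pos.2 hneg), neg_eq_iff_eq_neg]
      _ ↔ y = -p' s := by rw [← hinj.eq_iff (a := y), hGp']
      _ ↔ |(Θ (s, y)).1| = b y := by
          rw [← neg_eq_iff_eq_neg, ← hp' s (-y) (neg_pos.2 hy), hb.even]
          simp
  · have hpos : 0 < (G (s, y)).2 := sign_eq_one_iff.1 (hsign.trans (sign_pos hy))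
    rw [hq _ hpos, hp s y hy, ← hinj.eq_iff (a := y), hGp]

/-- The predicate `S` selects the half planes `0 < y` and `y < 0` in which the impasse set contains
the two branches. -/
theorem orbitallyEquivAt_const_of_isTransverseBranch {v : ℝ → ℝ → ℝ} {K M : NNReal}
    {b b' : ℝ → ℝ} {X : ℝ × ℝ → ℝ × ℝ} {q δ : ℝ × ℝ → ℝ} {σ : ℝ} {S : SignType → Prop}
    (hK : ∀ y, LipschitzWith K (v y)) (hv : ∀ x, Continuous fun y => v y x)
    (hb : IsTransverseBranch v M b b') (hq : IsDirectedSpeed σ q)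
    (hX : X =ᶠ[𝓝 (0, 0)] slopeField v q)
    (hδ : ∀ z, δ z = 0 ↔ z.2 = 0 ∨ S (SignType.sign z.2) ∧ |z.1| = b z.2) :
    OrbitallyEquivAt X δ (0, 0) (fun _ => (0, σ)) δ (0, 0) := by
  obtain ⟨Θ, hΘ⟩ := exists_isStraightening hK hb.bound hv
  obtain ⟨G, hG, hG_zero, hG_branch⟩ := hb.exists_straightening_branch hΘ
  have hσ : σ ≠ 0 := left_ne_zero_of_mul (hq.mul_pos 0).ne'
  have hq_const : IsDirectedSpeed σ fun _ => σ :=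
    ⟨continuous_const, fun _ => mul_self_pos.2 hσ, |σ|, fun _ => le_rfl⟩
  have hY : (fun _ => (0, σ)) = slopeField (fun _ _ => 0) fun _ => σ := by
    simp [funext_iff, slopeField]
  have hΘ_zero : Θ.symm (0, 0) = (0, 0) := by rw [Homeomorph.symm_apply_eq, hΘ.apply_zero]
  have hGδ : ∀ z, δ (G z) = 0 ↔ δ (Θ z) = 0 := fun ⟨s, y⟩ => by
    have hsign := hG.sign_snd (hG_zero s) y
    rw [hδ, hδ, hG.fst_apply, hΘ.snd_apply, ← sign_eq_zero_iff, hsign, sign_eq_zero_iff]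
    exact or_congr_right' fun hy => and_congr_right' (hG_branch s y hy)
  rw [hY]
  refine orbitallyEquivAt_of_homeomorph (Θ.symm.trans G) hX ?_ (fun z => ?_)
    (hG.carriesPhaseCurves hΘ isStraightening_refl hK hq hq_const)
    (hG.symm.carriesPhaseCurves isStraightening_refl hΘ (K := 0)
      (fun _ => LipschitzWith.const 0) hq_const hq)
  · rw [Homeomorph.trans_apply, hΘ_zero, hG_zero]
  · rw [Homeomorph.trans_apply, hGδ, Θ.apply_symm_apply]

/-! ### Localization -/

lemma exists_contDiff_hasCompactSupport_eventuallyEq {E F : Type*} [NormedAddCommGroup E]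
    [NormedSpace ℝ E] [FiniteDimensional ℝ E] [NormedAddCommGroup F] [NormedSpace ℝ F]
    {f : E → F} {p : E} {n : ℕ} (hf : ContDiffAt ℝ n f p) {U : Set E} (hU : U ∈ 𝓝 p) :
    ∃ g : E → F, ContDiff ℝ n g ∧ HasCompactSupport g ∧ g =ᶠ[𝓝 p] f ∧
      Function.support g ⊆ U ∧ ∀ z, ‖g z‖ ≤ ‖f z‖ := by
  obtain ⟨r, hr, hball⟩ := Metric.nhds_basis_closedBall.mem_iff.1
    (inter_mem hU (hf.eventually (by simp)))
  let χ : ContDiffBump p := ⟨r / 2, r, half_pos hr, half_lt_self hr⟩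
  have hχ : tsupport χ ⊆ U ∩ {z | ContDiffAt ℝ n f z} := χ.tsupport_eq.trans_subset hball
  refine ⟨fun z => χ z • f z, contDiff_iff_contDiffAt.2 fun z => ?_, χ.hasCompactSupport.smul_right,
    χ.eventuallyEq_one.mono fun z hz => ?_, fun z hz => ?_, fun z => ?_⟩
  · by_cases hz : z ∈ tsupport χ
    · exact χ.contDiffAt.smul (hχ hz).2
    · exact (contDiffAt_const (c := 0)).congr_of_eventuallyEq
        ((notMem_tsupport_iff_eventuallyEq.1 hz).mono fun w hw => by simp [hw])
  · simp [hz]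
  · exact (hχ (subset_tsupport _ (left_ne_zero_of_smul (Function.mem_support.1 hz)))).1
  · rw [norm_smul, Real.norm_of_nonneg χ.nonneg]
    exact mul_le_of_le_one_left (norm_nonneg _) χ.le_one

lemma exists_isDirectedSpeed_eventuallyEq {q : ℝ × ℝ → ℝ} {p : ℝ × ℝ} (hq : ContDiffAt ℝ 1 q p)
    (hp : q p ≠ 0) : ∃ r, IsDirectedSpeed (q p) r ∧ r =ᶠ[𝓝 p] q := by
  have hU : ∀ᶠ z in 𝓝 p, |q z - q p| < |q p| :=
    (hq.continuousAt.sub_const (q p)).abs.eventually_lt_const (by simpa using hp)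
  obtain ⟨g, hg, -, hg_eq, hgU, hg_le⟩ :=
    exists_contDiff_hasCompactSupport_eventuallyEq (n := 1)
      (hq.sub (contDiffAt_const (c := q p))) hU
  have hg_lt : ∀ z, |g z| < |q p| := fun z => by
    by_cases hz : g z = 0
    · simpa [hz] using hp
    · exact (hg_le z).trans_lt (hgU hz)
  refine ⟨fun z => q p + g z, ⟨by fun_prop, fun z => ?_, |q p| + |q p|, fun z => ?_⟩,
    hg_eq.mono fun z hz => by simp [hz]⟩
  · have := neg_abs_le (q p * g z)
    have := mul_lt_mul_of_pos_left (hg_lt z) (abs_pos.2 hp)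
    rw [← abs_mul, abs_mul_abs_self] at this
    linarith
  · exact (abs_add_le _ _).trans (add_le_add_right (hg_lt z).le _)

lemma exists_slopeField_eventuallyEq {P Q : ℝ × ℝ → ℝ} {p : ℝ × ℝ} (hP : ContDiffAt ℝ 1 P p)
    (hQ : ContDiffAt ℝ 1 Q p) (hp : Q p ≠ 0) {U : Set (ℝ × ℝ)} (hU : U ∈ 𝓝 p) :
    ∃ (K : NNReal) (v : ℝ → ℝ → ℝ) (q : ℝ × ℝ → ℝ), (∀ y, LipschitzWith K (v y)) ∧
      (∀ x, Continuous fun y => v y x) ∧ IsDirectedSpeed (Q p) q ∧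
      (fun z => (P z, Q z)) =ᶠ[𝓝 p] slopeField v q ∧
      ∀ y x, v y x = 0 ∨ (x, y) ∈ U ∧ |v y x| ≤ |P (x, y) / Q (x, y)| := by
  obtain ⟨q, hq, hq_eq⟩ := exists_isDirectedSpeed_eventuallyEq hQ hp
  obtain ⟨g, hg, hg_supp, hg_eq, hgU, hg_le⟩ :=
    exists_contDiff_hasCompactSupport_eventuallyEq (n := 1) (hP.div hQ hp) hU
  obtain ⟨K, hK⟩ := hg.lipschitzWith_of_hasCompactSupport hg_supp one_ne_zero
  have hg_cont := hg.continuous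
  refine ⟨K, fun y x => g (x, y), q, fun y => ?_, fun x => by fun_prop, hq, ?_,
    fun y x => or_iff_not_imp_left.2 fun hx => ⟨hgU hx, hg_le (x, y)⟩⟩
  · simpa using! hK.comp (LipschitzWith.prodMk_right y)
  · filter_upwards [hq_eq, hg_eq, hQ.continuousAt.eventually_ne hp] with z hqz hgz hz
    simp only [slopeField, hqz, hgz, Pi.div_apply, div_mul_cancel₀ _ hz]

/-! ### The singular curve -/

section SingularCurve

variable {v : ℝ → ℝ → ℝ} {M : NNReal} {a : ℝ} {n : ℕ}

lemma hasDerivAt_sqrt_abs_pow (n : ℕ) {y : ℝ} (hy : 0 < y) :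
    HasDerivAt (fun y => √|y| ^ (n + 2)) ((n + 2) / 2 * √y ^ n) y := by
  have hsqrt : HasDerivAt (fun y => √y ^ (n + 2)) ((n + 2) / 2 * √y ^ n) y :=
    ((Real.hasDerivAt_sqrt hy.ne').pow (n + 2)).congr_deriv (by
      have := (Real.sqrt_pos.2 hy).ne'
      rw [show n + 2 - 1 = n + 1 from rfl, pow_succ]
      push_cast
      field_simp)
  exact hsqrt.congr_of_eventuallyEq
    ((eventually_gt_nhds hy).mono fun r hr => by simp only [abs_of_pos hr])

lemma sqrt_abs_pow_add_two (n : ℕ) (y : ℝ) : √|y| ^ (n + 2) = √|y| ^ n * |y| := by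
  rw [pow_add, Real.sq_sqrt (abs_nonneg y)]

lemma isTransverseBranch_sqrt_abs_pow (hM : M < a) (hbound : ∀ y x, |v y x| ≤ M)
    (hv : ∀ y x, y ≠ 0 → |x| = a * √|y| ^ (n + 2) → |v y x| < a * ((n + 2) / 2 * √|y| ^ n)) :
    IsTransverseBranch v M (fun y => a * √|y| ^ (n + 2))
      (fun y => a * ((n + 2) / 2 * √y ^ n)) where
  bound := hbound
  continuous := by fun_prop
  even y := by simp only [abs_neg]
  nonneg y := mul_nonneg (M.coe_nonneg.trans hM.le) (by positivity)
  apply_zero := by simp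
  hasDerivAt y hy := (hasDerivAt_sqrt_abs_pow n hy).const_mul a
  abs_lt_deriv := hv
  tendsto := by
    refine tendsto_atTop_mono' _ ((eventually_ge_atTop 1).mono fun y hy => ?_)
      (tendsto_id.const_mul_atTop (sub_pos.2 hM))
    have hy₀ : 0 ≤ y := zero_le_one.trans hy
    have hpow : y ≤ √|y| ^ (n + 2) := by
      rw [sqrt_abs_pow_add_two, abs_of_nonneg hy₀]
      exact le_mul_of_one_le_left hy₀ (one_le_pow₀ (Real.one_le_sqrt.2 hy))
    have := mul_le_mul_of_nonneg_left hpow (M.coe_nonneg.trans hM.le)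
    rw [id_eq, sub_mul]
    linarith

lemma sq_eq_iff_abs_eq {x c r : ℝ} (hr : 0 ≤ r) (hrc : r ^ 2 = |c|) :
    x ^ 2 = c ↔ 0 ≤ c ∧ |x| = r := by
  rw [← pow_left_inj₀ (abs_nonneg x) hr two_ne_zero, sq_abs, hrc]
  exact ⟨fun h => ⟨h ▸ sq_nonneg x, h.trans (abs_of_nonneg (h ▸ sq_nonneg x)).symm⟩,
    fun ⟨hc, h⟩ => h.trans (abs_of_nonneg hc)⟩

lemma sq_mul_add_mul_pow_eq_zero_iff (ε : ℝ) (n : ℕ) (x y : ℝ) :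
    x ^ 2 * y + ε * y ^ (n + 3) = 0 ↔
      y = 0 ∨ 0 ≤ -(SignType.sign ε * SignType.sign y ^ (n + 2)) ∧
        |x| = √|ε| * √|y| ^ (n + 2) := by
  have hsq : (√|ε| * √|y| ^ (n + 2)) ^ 2 = |-(ε * y ^ (n + 2))| := by
    rw [mul_pow, ← pow_mul, mul_comm (n + 2), pow_mul, Real.sq_sqrt (abs_nonneg ε),
      Real.sq_sqrt (abs_nonneg y), abs_neg, abs_mul, abs_pow]
  have hsign : 0 ≤ -(ε * y ^ (n + 2)) ↔
      0 ≤ -(SignType.sign ε * SignType.sign y ^ (n + 2)) := by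
    rw [← sign_nonneg_iff, Left.sign_neg, sign_mul, sign_pow]
  calc x ^ 2 * y + ε * y ^ (n + 3) = 0 ↔ y * (x ^ 2 + ε * y ^ (n + 2)) = 0 := by ring_nf
    _ ↔ y = 0 ∨ x ^ 2 = -(ε * y ^ (n + 2)) := by rw [mul_eq_zero, add_eq_zero_iff_eq_neg]
    _ ↔ _ := by rw [sq_eq_iff_abs_eq (by positivity) hsq, hsign]

end SingularCurve

lemma eventually_abs_le_of_abs_fst_eq {f : ℝ × ℝ → ℝ} {b w : ℝ → ℝ}
    (hf : ContDiffAt ℝ 1 f (0, 0)) (hf_axis : (fun y => f (0, y)) =o[𝓝 0] w) (hb : b =o[𝓝 0] w)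
    {c : ℝ} (hc : 0 < c) : ∀ᶠ z in 𝓝 (0, 0), |z.1| = b z.2 → |f z| ≤ c * |w z.2| := by
  obtain ⟨K, t, ht, hK⟩ := hf.exists_lipschitzOnWith
  have hsnd : Tendsto Prod.snd (𝓝 ((0 : ℝ), (0 : ℝ))) (𝓝 0) := continuous_snd.tendsto _
  have haxis : Tendsto (fun z : ℝ × ℝ => ((0 : ℝ), z.2)) (𝓝 (0, 0)) (𝓝 (0, 0)) :=
    Continuous.tendsto' (by fun_prop) _ _ rfl
  filter_upwards [ht, haxis ht, hsnd.eventually (hf_axis.def (half_pos hc)),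
    hsnd.eventually ((hb.const_mul_left K).def (half_pos hc))] with z hz hz₀ hfz hbz hzb
  calc |f z| ≤ |f (0, z.2)| + |f z - f (0, z.2)| := by
        linarith [abs_sub_abs_le_abs_sub (f z) (f (0, z.2))]
    _ ≤ |f (0, z.2)| + K * b z.2 := by
        gcongr
        simpa [Real.dist_eq, Prod.dist_eq, ← hzb] using hK.dist_le_mul z hz _ hz₀
    _ ≤ c / 2 * |w z.2| + c / 2 * |w z.2| := add_le_add hfz ((le_abs_self _).trans hbz)
    _ = c * |w z.2| := by ring

lemma isLittleO_sqrt_abs_pow_add_two (a : ℝ) (n : ℕ) :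
    (fun y => a * √|y| ^ (n + 2)) =o[𝓝 0] fun y => √|y| ^ n := by
  have habs : (fun y : ℝ => |y|) =o[𝓝 0] fun _ => (1 : ℝ) :=
    (isLittleO_one_iff ℝ).2 (Continuous.tendsto' (by fun_prop) _ _ abs_zero)
  simpa only [sqrt_abs_pow_add_two, mul_one] using
    ((isBigO_refl (fun y : ℝ => √|y| ^ n) _).mul_isLittleO habs).const_mul_left a

lemma isLittleO_div_of_continuousAt {u q w : ℝ → ℝ} {p : ℝ} (hu : u =o[𝓝 p] w)
    (hq : ContinuousAt q p) (hp : q p ≠ 0) : (fun y => u y / q y) =o[𝓝 p] w := by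
  simpa only [div_eq_mul_inv, mul_one, Pi.inv_apply] using!
    hu.mul_isBigO ((hq.inv₀ hp).isBigO_one ℝ)

lemma exists_isTransverseBranch_slopeField {P Q : ℝ × ℝ → ℝ} {a : ℝ} {n : ℕ}
    (hP : ContDiffAt ℝ 1 P (0, 0)) (hQ : ContDiffAt ℝ 1 Q (0, 0)) (hQ0 : Q (0, 0) ≠ 0)
    (hflat : (fun y => P (0, y)) =o[𝓝 0] fun y => √|y| ^ n) (ha : 0 < a) :
    ∃ (K M : NNReal) (v : ℝ → ℝ → ℝ) (q : ℝ × ℝ → ℝ) (b' : ℝ → ℝ),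
      (∀ y, LipschitzWith K (v y)) ∧ (∀ x, Continuous fun y => v y x) ∧
      IsTransverseBranch v M (fun y => a * √|y| ^ (n + 2)) b' ∧ IsDirectedSpeed (Q (0, 0)) q ∧
      (fun z => (P z, Q z)) =ᶠ[𝓝 (0, 0)] slopeField v q := by
  have hslope : ContDiffAt ℝ 1 (fun z => P z / Q z) (0, 0) := hP.div hQ hQ0
  have hslope_axis : (fun y => P (0, y) / Q (0, y)) =o[𝓝 0] fun y => √|y| ^ n :=
    isLittleO_div_of_continuousAt hflat
      (hQ.continuousAt.comp (f := fun y : ℝ => ((0 : ℝ), y)) (by fun_prop)) hQ0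
  have hslope_zero : P (0, 0) / Q (0, 0) = 0 := by
    rw [isLittleO_pure.1 (hflat.mono (pure_le_nhds 0)), zero_div]
  have hsmall : ∀ᶠ z in 𝓝 (0, 0), |P z / Q z| < a / 2 :=
    hslope.continuousAt.abs.eventually_lt_const
      (by simpa only [hslope_zero, abs_zero] using! half_pos ha)
  have hbranch := eventually_abs_le_of_abs_fst_eq hslope hslope_axis
    (isLittleO_sqrt_abs_pow_add_two a n) (half_pos ha)
  obtain ⟨K, v, q, hK, hv, hq, hXv, hv_le⟩ :=
    exists_slopeField_eventuallyEq hP hQ hQ0 (hsmall.and hbranch)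
  refine ⟨K, ⟨a / 2, by positivity⟩, v, q, _, hK, hv, isTransverseBranch_sqrt_abs_pow
    (half_lt_self ha) (fun y x => ?_) fun y x hy hx => ?_, hq, hXv⟩
  · rcases hv_le y x with hzero | ⟨⟨hle, -⟩, hv_le⟩
    · simpa only [hzero, abs_zero] using! (half_pos ha).le
    · exact hv_le.trans hle.le
  · have hpow : 0 < √|y| ^ n := by positivity
    rcases hv_le y x with hzero | ⟨⟨-, hle⟩, hv_le⟩
    · rw [hzero, abs_zero]
      positivity
    · calc |v y x| ≤ a / 2 * √|y| ^ n := by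
            simpa only [abs_of_pos hpow] using hv_le.trans (hle hx)
        _ < a * ((n + 2) / 2 * √|y| ^ n) := by
            have : 0 < a * ((n + 1) / 2 * √|y| ^ n) := by positivity
            linarith

lemma isLittleO_sqrt_abs_pow_of_analyticAt {u : ℝ → ℝ} (hu : AnalyticAt ℝ u 0) (hu0 : u 0 = 0)
    {m : ℕ} (hm : ∀ i, 1 ≤ i → 2 * i ≤ m → iteratedDeriv i u 0 = 0) :
    u =o[𝓝 0] fun y => √|y| ^ m := by
  have hderiv : ∀ i < m / 2 + 1, iteratedDeriv i u 0 = 0 := fun i hi => by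
    rcases i.eq_zero_or_pos with rfl | hpos
    exacts [hu0, hm i hpos (by omega)]
  obtain ⟨g, hg, hug⟩ := (natCast_le_analyticOrderAt hu).1
    ((natCast_le_analyticOrderAt_iff_iteratedDeriv_eq_zero hu).2 hderiv)
  have hsqrt : Tendsto (fun y : ℝ => √|y|) (𝓝 0) (𝓝 0) :=
    Continuous.tendsto' (by fun_prop) _ _ (by simp)
  have hpow : (fun y : ℝ => |y| ^ (m / 2 + 1)) =o[𝓝 0] fun y => √|y| ^ m := by
    simpa only [Function.comp_def, pow_mul, Real.sq_sqrt (abs_nonneg _)] using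
      (isLittleO_pow_pow (𝕜 := ℝ) (show m < 2 * (m / 2 + 1) by omega)).comp_tendsto hsqrt
  simp only [← abs_pow, isLittleO_abs_left] at hpow
  refine (hpow.mul_isBigO (hg.continuousAt.isBigO_one ℝ)).congr' ?_ (.of_forall fun y => mul_one _)
  exact hug.mono fun y hy => by simp [hy]

theorem Dk_case6_general (k : ℕ) (hk : 4 ≤ k) (ε : ℝ) (hε : ε ≠ 0) (P Q : ℝ × ℝ → ℝ)
    (hP : ContDiffAt ℝ 1 P (0, 0)) (hQ : ContDiffAt ℝ 1 Q (0, 0)) (hQ0 : Q (0, 0) ≠ 0)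
    (hflat : (fun y => P (0, y)) =o[𝓝 0] fun y => √|y| ^ (k - 4)) :
    OrbitallyEquivAt (fun z => (P z, Q z))
      (fun z => z.1 ^ 2 * z.2 + ε * z.2 ^ (k - 1)) (0, 0)
      (fun _ => ((0 : ℝ), Q (0, 0)))
      (fun z => z.1 ^ 2 * z.2 + ε * z.2 ^ (k - 1)) (0, 0) := by
  obtain ⟨n, rfl⟩ := Nat.exists_eq_add_of_le' hk
  have hsqrt : 0 < √|ε| := Real.sqrt_pos.2 (abs_pos.2 hε)
  obtain ⟨K, M, v, q, b', hK, hv, hb, hq, hXv⟩ :=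
    exists_isTransverseBranch_slopeField hP hQ hQ0 hflat hsqrt
  exact orbitallyEquivAt_const_of_isTransverseBranch
    (S := fun s => 0 ≤ -(SignType.sign ε * s ^ (n + 2))) hK hv hb hq hXv
    fun z => sq_mul_add_mul_pow_eq_zero_iff ε n z.1 z.2

/-- (`D_k`-type impasse curve, `k ≥ 4`, Case 6 of Table 2.)
If `δ(x,y) = x²y + ε·y^{k−1}`, `X = (P,Q)` is real-analytic near the origin with `P(0,0) = 0`,
`Q(0,0) ≠ 0`, and `∂ⁿP/∂yⁿ(0,0) = 0` for all `1 ≤ 2n ≤ k − 4` (i.e. `k − 4 < 2n₀`), then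
`(X, δ)` is orientation-preserving `C⁰`-orbitally equivalent at the origin to the system
with constant adjoint vector field `(0, Q(0,0))`. -/
theorem Dk_case6 (k : ℕ) (hk : 4 ≤ k) (ε : ℝ) (hε : ε = 1 ∨ ε = -1)
    (P Q : ℝ × ℝ → ℝ)
    (hP : AnalyticAt ℝ P (0, 0)) (hQ : AnalyticAt ℝ Q (0, 0))
    (hP0 : P (0, 0) = 0) (hQ0 : Q (0, 0) ≠ 0)
    (hflat : ∀ n : ℕ, 1 ≤ n → 2 * n ≤ k - 4 → iteratedDeriv n (fun y => P (0, y)) 0 = 0) :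
    OrbitallyEquivAt (fun z => (P z, Q z))
      (fun z => z.1 ^ 2 * z.2 + ε * z.2 ^ (k - 1)) (0, 0)
      (fun _ => ((0 : ℝ), Q (0, 0)))
      (fun z => z.1 ^ 2 * z.2 + ε * z.2 ^ (k - 1)) (0, 0) := by
  have hε0 : ε ≠ 0 := by rcases hε with rfl | rfl <;> norm_num
  have haxis : AnalyticAt ℝ (fun y => P (0, y)) 0 :=
    hP.comp (f := fun y : ℝ => ((0 : ℝ), y)) (by fun_prop)
  exact Dk_case6_general k hk ε hε0 P Q hP.contDiffAt hQ.contDiffAt hQ0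
    (isLittleO_sqrt_abs_pow_of_analyticAt haxis hP0 hflat)
end
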